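/- Let K be an algebraically closed field and n ≥ 2, m ≥ 1 integers, and let r be the Krull dimension of R(n,m) = K[Mat_{n,n}^m]^{SL_n × SL_n}. Then there exist r homogeneous invariants f_1,...,f_r ∈ R(n,m), each of degree n(n−1), whose common zero set in Mat_{n,n}^m equals the null cone N(SL_n × SL_n, Mat_{n,n}^m), i.e. equals the common zero set of all homogeneous invariants of positive degree in R(n,m). -/

import Mathlib

open MvPolynomial Matrix

/-- Coordinate functions of an `m`-tuple of `n × n` matrices. -/
def matCoords {K : Type} [Field K] {n m : ℕ} (X : Fin m → Matrix (Fin n) (Fin n) K) :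
    Fin m × Fin n × Fin n → K :=
  fun p => X p.1 p.2.1 p.2.2

/-- The ring of matrix semi-invariants `R(n,m) = K[Mat_{n,n}^m]^{SL_n × SL_n}`, where
`(A,B)` acts by `(X_1, …, X_m) ↦ (A X_1 B⁻¹, …, A X_m B⁻¹)`. -/
noncomputable def matrixSemiInvariants (K : Type) [Field K] (n m : ℕ) :
    Subalgebra K (MvPolynomial (Fin m × Fin n × Fin n) K) :=
  ⨅ (A : SpecialLinearGroup (Fin n) K) (B : SpecialLinearGroup (Fin n) K)
    (X : Fin m → Matrix (Fin n) (Fin n) K),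
      AlgHom.equalizer
        (aeval (matCoords fun i => A.val * X i * (B⁻¹).val))
        (aeval (matCoords X))

/-- The ring of matrix invariants `S(n,m) = K[Mat_{n,n}^m]^{GL_n}`, where `A` acts by
simultaneous conjugation. -/
noncomputable def matrixInvariants (K : Type) [Field K] (n m : ℕ) :
    Subalgebra K (MvPolynomial (Fin m × Fin n × Fin n) K) :=
  ⨅ (A : GeneralLinearGroup (Fin n) K) (X : Fin m → Matrix (Fin n) (Fin n) K),
      AlgHom.equalizer
        (aeval (matCoords fun i => A.val * X i * (A⁻¹).val))
        (aeval (matCoords X))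

/-- chain of primes in polynomial ring through a point -/
noncomputable def dmChainHom (K : Type) [Field K] {e : ℕ} (a : Fin e → K) (i : ℕ) :
    MvPolynomial (Fin e) K →ₐ[K] MvPolynomial (Fin e) K :=
  aeval fun j : Fin e => if j.val < i then C (a j) else X j

theorem dm_chain_comp (K : Type) [Field K] {e : ℕ} (a : Fin e → K) (i : ℕ)
    (p : MvPolynomial (Fin e) K) :
    dmChainHom K a (i+1) (dmChainHom K a i p) = dmChainHom K a (i+1) p := by
  have : (dmChainHom K a (i+1)).comp (dmChainHom K a i) = dmChainHom K a (i+1) := by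
    ext j : 1
    by_cases h : j.val < i
    · have h2 : j.val < i + 1 := by omega
      simp [dmChainHom, h, MvPolynomial.algebraMap_eq]
      intro h3; omega
    · simp [dmChainHom, h]
  exact DFunLike.congr_fun this p

theorem dm_chain_eval (K : Type) [Field K] {e : ℕ} (a : Fin e → K) (i : ℕ)
    (p : MvPolynomial (Fin e) K) :
    aeval a (dmChainHom K a i p) = aeval a p := by
  have : (aeval a : MvPolynomial (Fin e) K →ₐ[K] K).comp (dmChainHom K a i) = aeval a := by
    ext j : 1
    by_cases h : j.val < i <;> simp [dmChainHom, h]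
  exact DFunLike.congr_fun this p

theorem dm_chain_le (K : Type) [Field K] {e : ℕ} (a : Fin e → K) (i : ℕ) :
    RingHom.ker (dmChainHom K a i) ≤ RingHom.ker (dmChainHom K a (i+1)) := by
  intro p hp
  rw [RingHom.mem_ker] at *
  rw [← dm_chain_comp, hp, map_zero]

theorem dm_chain_ne (K : Type) [Field K] {e : ℕ} (a : Fin e → K) (i : ℕ) (hi : i < e) :
    ∃ p, p ∉ RingHom.ker (dmChainHom K a i) ∧ p ∈ RingHom.ker (dmChainHom K a (i+1)) := by
  refine ⟨X ⟨i, hi⟩ - C (a ⟨i, hi⟩), ?_, ?_⟩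
  · rw [RingHom.mem_ker]
    intro h
    have h1 : (X (⟨i, hi⟩ : Fin e) : MvPolynomial (Fin e) K) - C (a ⟨i, hi⟩) = 0 := by
      simpa [dmChainHom, MvPolynomial.algebraMap_eq] using h
    have := congrArg (aeval (fun j => a j + 1)) h1
    simp at this
  · rw [RingHom.mem_ker]
    simp [dmChainHom, MvPolynomial.algebraMap_eq]

theorem dm_dim_core (K : Type) [Field K] [Infinite K] {e : ℕ} (R κ : Type) [CommRing R] [Field κ]
    [Algebra (MvPolynomial (Fin e) K) κ]
    (hinj : Function.Injective (algebraMap (MvPolynomial (Fin e) K) κ))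
    (φ : R →+* κ) (ψ : MvPolynomial (Fin e) K →+* R)
    (hψ : ∀ p, φ (ψ p) = algebraMap _ κ p)
    (f : MvPolynomial (Fin e) K) (hf : f ≠ 0)
    (hint : ∀ t, ∃ k : ℕ, IsIntegral (MvPolynomial (Fin e) K) (f ^ k • φ t)) :
    (e : WithBot ℕ∞) ≤ ringKrullDim R := by
  classical
  obtain ⟨a, ha⟩ : ∃ a : Fin e → K, aeval a f ≠ 0 := by
    by_contra! h
    exact hf (MvPolynomial.funext (by simpa [MvPolynomial.aeval_eq_eval] using h))
  let P := MvPolynomial (Fin e) K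
  let C' := integralClosure P κ
  let p : ℕ → Ideal P := fun i => RingHom.ker (dmChainHom K a i)
  have pprime : ∀ i, (p i).IsPrime := fun i => RingHom.ker_isPrime _
  have hfp : ∀ i, f ∉ p i := by
    intro i h
    apply ha
    rw [← dm_chain_eval K a i, (RingHom.mem_ker).1 h, map_zero]
  have hinjC : Function.Injective (algebraMap P C') := by
    intro x y h
    exact hinj (by simpa using congrArg (algebraMap C' κ) h)
  -- pulled back ideals
  have pull : ∀ (q : Ideal C'), q.IsPrime → (algebraMap P C' f) ∉ q → ∃ Q : Ideal R, Q.IsPrime ∧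
      ∀ t, t ∈ Q ↔ ∃ k : ℕ, ∃ c ∈ q, (c : κ) = f ^ k • φ t := by
    intro q hq hfq
    have key : ∀ t, ∃ k : ℕ, ∃ c : C', (c : κ) = f ^ k • φ t := fun t => by
      obtain ⟨k, hk⟩ := hint t
      exact ⟨k, ⟨_, hk⟩, rfl⟩
    refine ⟨{ carrier := {t | ∃ k : ℕ, ∃ c ∈ q, (c : κ) = f ^ k • φ t}
              add_mem' := ?_, zero_mem' := ?_, smul_mem' := ?_ }, ?_, ?_⟩
    · rintro x y ⟨k, c, hc, hc'⟩ ⟨l, d, hd, hd'⟩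
      refine ⟨k + l, f ^ l • c + f ^ k • d, q.add_mem ?_ ?_, ?_⟩
      · rw [Algebra.smul_def]; exact q.mul_mem_left _ hc
      · rw [Algebra.smul_def]; exact q.mul_mem_left _ hd
      · simp only [Subalgebra.coe_add, Subalgebra.coe_smul, hc', hd', map_add, smul_smul, smul_add]
        rw [← pow_add, ← pow_add, add_comm l k]
    · exact ⟨0, 0, q.zero_mem, by simp⟩
    · rintro r x ⟨k, c, hc, hc'⟩
      obtain ⟨l, d, hd⟩ := key r
      refine ⟨k + l, d * c, q.mul_mem_left _ hc, ?_⟩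
      simp only [Subalgebra.coe_mul, hc', hd, smul_eq_mul, map_mul, Algebra.smul_def, map_pow]
      ring
    · refine ⟨?_, ?_⟩
      · rw [Ideal.ne_top_iff_one]
        rintro ⟨k, c, hc, hc'⟩
        have : c = (algebraMap P C' f) ^ k := by
          apply Subtype.ext
          rw [hc', map_one, Algebra.smul_def, mul_one, map_pow]
          rfl
        exact hfq (hq.mem_of_pow_mem k (this ▸ hc))
      · rintro x y ⟨k, c, hc, hc'⟩
        obtain ⟨l, d, hd⟩ := key x
        obtain ⟨l', d', hd'⟩ := key y
        have : d * d' * (algebraMap P C' f) ^ k = c * (algebraMap P C' f) ^ (l + l') := by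
          apply Subtype.ext
          simp only [Subalgebra.coe_mul, hc', hd, hd', Algebra.smul_def, map_pow, map_mul,
            Subalgebra.coe_pow]
          change _ * _ * (algebraMap P κ f) ^ k = _ * (algebraMap P κ f) ^ (l+l')
          ring
        have h2 : d * d' * (algebraMap P C' f) ^ k ∈ q := by
          rw [this]; exact q.mul_mem_right _ hc
        rcases hq.mem_or_mem h2 with h3 | h3
        · rcases hq.mem_or_mem h3 with h4 | h4
          · exact Or.inl ⟨l, d, h4, hd⟩
          · exact Or.inr ⟨l', d', h4, hd'⟩
        · exact absurd (hq.mem_of_pow_mem k h3) hfq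
    · intro t; rfl
  have main : ∀ i : ℕ, i ≤ e → ∃ q : Ideal C', q.IsPrime ∧ q.comap (algebraMap P C') = p i ∧
      ∃ Q : PrimeSpectrum R, (∀ t, t ∈ Q.asIdeal ↔ ∃ k : ℕ, ∃ c ∈ q, (c : κ) = f ^ k • φ t) ∧
        (i : ℕ∞) ≤ Order.height Q := by
    intro i
    induction i with
    | zero =>
      intro _
      obtain ⟨q, -, hq, hqp⟩ := Ideal.exists_ideal_over_prime_of_isIntegral (S := C') (p 0) ⊥
        (by 
          intro x hx
          have : x = 0 := hinjC (by simpa using hx)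
          rw [this]; exact (p 0).zero_mem)
      obtain ⟨Q, hQ, hQ'⟩ := pull q hq (fun h => hfp 0 (by rw [← hqp]; exact h))
      exact ⟨q, hq, hqp, ⟨Q, hQ⟩, hQ', by simp⟩
    | succ i ih =>
      intro hi
      obtain ⟨q, hq, hqp, Q, hQ, hht⟩ := ih (by omega)
      obtain ⟨q', hqq', hq', hqp'⟩ := Ideal.exists_ideal_over_prime_of_isIntegral (S := C') (p (i+1)) q
        (by rw [hqp]; exact dm_chain_le K a i)
      obtain ⟨Q', hQ'p, hQ'⟩ := pull q' hq' (fun h => hfp (i+1) (by rw [← hqp']; exact h))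
      refine ⟨q', hq', hqp', ⟨Q', hQ'p⟩, hQ', ?_⟩
      have hlt : Q < (⟨Q', hQ'p⟩ : PrimeSpectrum R) := by
        rw [lt_iff_le_not_ge]
        constructor
        · intro t ht
          obtain ⟨k, c, hc, hc'⟩ := (hQ t).1 ht
          exact (hQ' t).2 ⟨k, c, hqq' hc, hc'⟩
        · intro hle
          obtain ⟨x, hx1, hx2⟩ := dm_chain_ne K a i (by omega)
          have h1 : ψ x ∈ Q' := (hQ' _).2 ⟨0, algebraMap P C' x, by
            have : x ∈ q'.comap (algebraMap P C') := by rw [hqp']; exact hx2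
            exact this, by rw [hψ]; simp; rfl⟩
          obtain ⟨k, c, hc, hc'⟩ := (hQ _).1 (hle h1)
          apply hx1
          have h3 : f ^ k * x ∈ p i := by
            rw [← hqp, Ideal.mem_comap]
            convert hc
            apply Subtype.ext
            rw [hc', hψ, Algebra.smul_def, ← map_mul]
            rfl
          rcases (pprime i).mem_or_mem h3 with h4 | h4
          · exact absurd ((pprime i).mem_of_pow_mem k h4) (hfp i)
          · exact h4
      calc ((i+1 : ℕ) : ℕ∞) = (i : ℕ∞) + 1 := by push_cast; rfl
        _ ≤ Order.height Q + 1 := by gcongr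
        _ ≤ _ := Order.height_add_one_le hlt
  obtain ⟨q, -, -, Q, -, hQ⟩ := main e le_rfl
  calc (e : WithBot ℕ∞) ≤ ((Order.height Q : ℕ∞) : WithBot ℕ∞) := by exact_mod_cast hQ
    _ ≤ _ := Order.height_le_krullDim Q

theorem dm_int_add {P A : Type} [CommRing P] [CommRing A] [Algebra P A] (f : P) (k l : ℕ)
    (x y : A) (hk : IsIntegral P (f ^ k • x)) (hl : IsIntegral P (f ^ l • y)) :
    IsIntegral P (f ^ (k + l) • (x + y)) := by
  have := (hk.smul (f ^ l)).add (hl.smul (f ^ k))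
  rwa [smul_smul, smul_smul, ← pow_add, ← pow_add, add_comm l k, ← smul_add] at this

open TensorProduct in
theorem dm_dim (K : Type) [Field K] [Infinite K] {σ : Type} [Finite σ]
    (R : Subalgebra K (MvPolynomial σ K)) {e : ℕ} (h : Fin e → MvPolynomial σ K)
    (hR : ∀ i, h i ∈ R) (hind : AlgebraicIndependent K h) :
    (e : WithBot ℕ∞) ≤ ringKrullDim R := by
  classical
  let P := MvPolynomial (Fin e) K
  let T := MvPolynomial σ K
  letI algPT : Algebra P T := ((aeval h : P →ₐ[K] T) : P →+* T).toAlgebra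
  have hPT : ∀ p : P, algebraMap P T p = aeval h p := fun p => rfl
  haveI : IsScalarTower K P T := IsScalarTower.of_algebraMap_eq' (by
    ext1 x
    exact ((aeval h : P →ₐ[K] T).commutes x).symm)
  have hinjPT : Function.Injective (algebraMap P T) := hind
  haveI : Algebra.FiniteType P T := Algebra.FiniteType.of_restrictScalars_finiteType K P T
  let F := FractionRing P
  let TF := F ⊗[P] T
  haveI : Module.Flat P F := IsLocalization.flat F (nonZeroDivisors P)
  have hinjF : Function.Injective (algebraMap F TF) :=
    Algebra.TensorProduct.includeLeft_injective (S := F) hinjPT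
  haveI : Nontrivial TF := hinjF.nontrivial
  obtain ⟨M, hM⟩ := Ideal.exists_maximal TF
  let κ := TF ⧸ M
  letI : Field κ := Ideal.Quotient.field M
  haveI : Algebra.FiniteType F κ := Algebra.FiniteType.of_surjective (Ideal.Quotient.mkₐ F M) (Ideal.Quotient.mkₐ_surjective F M)
  haveI : Module.Finite F κ := finite_of_finite_type_of_isJacobsonRing F κ
  haveI : Algebra.IsAlgebraic F κ := Algebra.IsAlgebraic.of_finite F κ
  haveI : Algebra.IsAlgebraic P κ := (IsFractionRing.comap_isAlgebraic_iff (A := P) (K := F) (C := κ)).2 inferInstance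
  have hinjκ : Function.Injective (algebraMap P κ) := by
    rw [IsScalarTower.algebraMap_eq P F κ]
    exact (algebraMap F κ).injective.comp (IsFractionRing.injective P F)
  let φT : T →ₐ[P] κ := ((Ideal.Quotient.mkₐ P M)).comp (Algebra.TensorProduct.includeRight)
  -- common denominators
  have hden : ∃ f : P, f ≠ 0 ∧ ∀ s : σ, IsIntegral P (f • φT (X s)) := by
    haveI := Fintype.ofFinite σ
    have hs : ∀ s : σ, ∃ y : P, y ≠ 0 ∧ IsIntegral P (y • φT (X s)) := fun s =>
      IsAlgebraic.exists_integral_multiple (Algebra.IsAlgebraic.isAlgebraic (R := P) (φT (X s)))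
    choose y hy hy' using hs
    refine ⟨∏ s, y s, Finset.prod_ne_zero_iff.2 fun s _ => hy s, fun s => ?_⟩
    rw [← Finset.prod_erase_mul _ _ (Finset.mem_univ s), mul_smul]
    exact (hy' s).smul _
  obtain ⟨f, hf, hfs⟩ := hden
  refine dm_dim_core K R κ hinjκ ((φT : T →+* κ).comp (R.val : R →+* T))
    ((aeval fun i => (⟨h i, hR i⟩ : R) : P →ₐ[K] R) : P →+* R) ?_ f hf ?_
  · intro p
    have : (R.val ((aeval fun i => (⟨h i, hR i⟩ : R) : P →ₐ[K] R) p)) = aeval h p := by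
      have : R.val.comp (aeval fun i => (⟨h i, hR i⟩ : R) : P →ₐ[K] R) = aeval h := by
        ext i : 1; simp
      exact DFunLike.congr_fun this p
    change φT (R.val ((aeval fun i => (⟨h i, hR i⟩ : R) : P →ₐ[K] R) p)) = _
    rw [this, ← hPT, AlgHom.commutes]
  · intro t
    change ∃ k : ℕ, IsIntegral P (f ^ k • φT t.1)
    generalize t.1 = u
    induction u using MvPolynomial.induction_on with
    | C a =>
      refine ⟨0, ?_⟩
      have : (C a : T) = algebraMap P T (C a) := by rw [hPT]; simp [MvPolynomial.algebraMap_eq]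
      rw [this, AlgHom.commutes, pow_zero, one_smul]
      exact isIntegral_algebraMap
    | add p q hp hq =>
      obtain ⟨k, hk⟩ := hp
      obtain ⟨l, hl⟩ := hq
      refine ⟨k + l, ?_⟩
      rw [map_add]
      exact dm_int_add _ _ _ _ _ hk hl
    | mul_X p s hp =>
      obtain ⟨k, hk⟩ := hp
      refine ⟨k + 1, ?_⟩
      have := hk.mul (hfs s)
      rw [smul_mul_smul_comm, ← map_mul, ← pow_succ] at this
      exact this

theorem dm_homog_smul {K σ : Type} [Field K] {q : ℕ} {p : MvPolynomial σ K}
    (hp : p.IsHomogeneous q) (s : K) (c : σ → K) :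
    aeval (fun i => s * c i) p = s ^ q * aeval c p := by
  rw [aeval_def, aeval_def, eval₂_eq, eval₂_eq, Finset.mul_sum]
  refine Finset.sum_congr rfl fun d hd => ?_
  have h1 : d.degree = q := by
    have := hp (mem_support_iff.1 hd)
    rw [Finsupp.degree_eq_weight_one]; exact this
  have : ∏ i ∈ d.support, (s * c i) ^ d i = s ^ q * ∏ i ∈ d.support, c i ^ d i := by
    simp_rw [mul_pow]
    rw [Finset.prod_mul_distrib, Finset.prod_pow_eq_pow_sum, ← h1]
    rfl
  rw [this]; ring

theorem dm_homog_rel {K σ : Type} [Field K] {N D : ℕ} (hD : 0 < D)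
    (F : Fin N → MvPolynomial σ K) (hF : ∀ i, (F i).IsHomogeneous D)
    (hdep : ¬ AlgebraicIndependent K F) :
    ∃ q, 0 < q ∧ ∃ p : MvPolynomial (Fin N) K, p ≠ 0 ∧ p.IsHomogeneous q ∧ aeval F p = 0 := by
  rw [algebraicIndependent_iff] at hdep
  push Not at hdep
  obtain ⟨p, hp, hp0⟩ := hdep
  have hcomp : ∀ q, aeval F (homogeneousComponent q p) = 0 := by
    intro q
    by_cases hq : q ∈ Finset.range (p.totalDegree + 1)
    · have h1 : homogeneousComponent (D * q) (aeval F p) = aeval F (homogeneousComponent q p) := by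
        conv_lhs => rw [← sum_homogeneousComponent p, map_sum, map_sum]
        rw [Finset.sum_eq_single_of_mem q hq]
        · exact homogeneousComponent_eq_self ((homogeneousComponent_isHomogeneous q p).aeval F hF)
        · intro b _ hb
          rw [homogeneousComponent_of_mem
            ((homogeneousComponent_isHomogeneous b p).aeval F hF : _ ∈ homogeneousSubmodule _ _ _)]
          rw [if_neg]
          intro h
          exact hb (Nat.eq_of_mul_eq_mul_left hD h).symm
      rw [← h1, hp, map_zero]
    · rw [homogeneousComponent_eq_zero _ _ (by simpa using hq), map_zero]
  have : ∃ q, homogeneousComponent q p ≠ 0 := by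
    by_contra! h
    apply hp0
    rw [← sum_homogeneousComponent p]
    exact Finset.sum_eq_zero fun i _ => h i
  obtain ⟨q, hq⟩ := this
  refine ⟨q, ?_, _, hq, homogeneousComponent_isHomogeneous q p, hcomp q⟩
  rcases Nat.eq_zero_or_pos q with rfl | h
  · exfalso
    have h2 := hcomp 0
    rw [homogeneousComponent_zero] at h2 hq
    rw [aeval_C, MvPolynomial.algebraMap_eq] at h2
    simp only [ne_eq, C_eq_zero] at hq h2
    exact hq h2
  · exact h

theorem dm_reduce {K σ : Type} [Field K] [Infinite K] (R : Subalgebra K (MvPolynomial σ K))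
    {D : ℕ} (hD : 0 < D) (N : ℕ) :
    ∀ (F : Fin N → MvPolynomial σ K), (∀ i, F i ∈ R ∧ (F i).IsHomogeneous D) →
    ∃ (e : ℕ) (h : Fin e → MvPolynomial σ K), (∀ i, h i ∈ R ∧ (h i).IsHomogeneous D) ∧
      AlgebraicIndependent K h ∧
      ∀ v : σ → K, (∀ i, aeval v (h i) = 0) → ∀ i, aeval v (F i) = 0 := by
  induction N with
  | zero =>
    intro F hF
    exact ⟨0, F, hF, by
      rw [algebraicIndependent_empty_type_iff]
      exact C_injective σ K, fun v h => h⟩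
  | succ N ih =>
    intro F hF
    by_cases hind : AlgebraicIndependent K F
    · exact ⟨N+1, F, hF, hind, fun v h => h⟩
    obtain ⟨q, hq, p, hp0, hpq, hp⟩ := dm_homog_rel hD F (fun i => (hF i).2) hind
    obtain ⟨c, hc⟩ : ∃ c : Fin (N+1) → K, aeval c p ≠ 0 := by
      by_contra! h
      exact hp0 (MvPolynomial.funext (by simpa [MvPolynomial.aeval_eq_eval] using h))
    obtain ⟨j, hj⟩ : ∃ j, c j ≠ 0 := by
      by_contra! h
      apply hc
      have := dm_homog_smul hpq 0 c
      rw [zero_pow hq.ne', zero_mul] at this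
      rw [← this]
      congr 2
      ext i; simp [h i]
    obtain ⟨e, h, hh, hhi, hv⟩ := ih (fun i => F (j.succAbove i) - (c (j.succAbove i) / c j) • F j)
      (fun i => ⟨R.sub_mem (hF _).1 (R.smul_mem (hF _).1 _),
        (hF _).2.sub ((homogeneousSubmodule σ K D).smul_mem _ (hF j).2)⟩)
    refine ⟨e, h, hh, hhi, fun v hv0 => ?_⟩
    have h1 := hv v hv0
    set s := aeval v (F j) / c j with hs
    have h2 : ∀ i, aeval v (F i) = s * c i := by
      intro i
      rcases eq_or_ne i j with rfl | hij
      · rw [hs]; field_simp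
      · obtain ⟨k, rfl⟩ := Fin.exists_succAbove_eq hij
        have := h1 k
        rw [map_sub, map_smul, sub_eq_zero] at this
        rw [this, hs, smul_eq_mul]; field_simp
    have h3 : aeval (fun i => s * c i) p = 0 := by
      have h4 : aeval v (aeval F p) = aeval (fun i => aeval v (F i)) p := by
        have : (aeval v : MvPolynomial σ K →ₐ[K] K).comp (aeval F) = aeval (fun i => aeval v (F i)) := by
          ext i : 1; simp
        exact DFunLike.congr_fun this p
      rw [hp, map_zero] at h4
      rw [h4]; congr 2; ext i; exact (h2 i).symm
    rw [dm_homog_smul hpq] at h3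
    have hs0 : s = 0 := by
      rcases mul_eq_zero.1 h3 with h | h
      · exact pow_eq_zero_iff hq.ne' |>.1 h
      · exact absurd h hc
    intro i
    rw [h2 i, hs0, zero_mul]

theorem dm_inv_gl {K : Type} [Field K] [IsAlgClosed K] {n m : ℕ} (hn : 0 < n)
    {g : MvPolynomial (Fin m × Fin n × Fin n) K} (hg : g ∈ matrixSemiInvariants K n m) {D : ℕ}
    (hD : g.IsHomogeneous D) (A B : Matrix (Fin n) (Fin n) K) (hA : A.det ≠ 0) (hB : B.det ≠ 0)
    (v : Fin m → Matrix (Fin n) (Fin n) K) :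
    (aeval (matCoords fun i => A * v i * B) g) ^ n =
      (A.det * B.det) ^ D * (aeval (matCoords v) g) ^ n := by
  have hsc : ∀ A : Matrix (Fin n) (Fin n) K, A.det ≠ 0 → ∃ a : K, ∃ A' : SpecialLinearGroup (Fin n) K,
      a ^ n = A.det ∧ A = a • A'.val := by
    intro A hA
    obtain ⟨a, ha⟩ := IsAlgClosed.exists_pow_nat_eq A.det hn
    have ha0 : a ≠ 0 := by
      rintro rfl
      rw [zero_pow hn.ne'] at ha
      exact hA ha.symm
    refine ⟨a, ⟨a⁻¹ • A, ?_⟩, ha, ?_⟩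
    · rw [det_smul, Fintype.card_fin, ← ha, ← mul_pow, inv_mul_cancel₀ ha0, one_pow]
    · simp [smul_smul, ha0]
  obtain ⟨a, A', ha, hA'⟩ := hsc A hA
  obtain ⟨b, B', hb, hB'⟩ := hsc B hB
  have hinv : aeval (matCoords fun i => A'.val * v i * B'.val) g = aeval (matCoords v) g := by
    simp only [matrixSemiInvariants, Algebra.mem_iInf, AlgHom.mem_equalizer] at hg
    simpa using hg A' B'⁻¹ v
  have : (matCoords fun i => A * v i * B) =
      fun p => (a * b) * (matCoords fun i => A'.val * v i * B'.val) p := by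
    funext p
    simp only [matCoords]
    rw [hA', hB', smul_mul_assoc, smul_mul_assoc, mul_smul_comm, smul_smul]
    rfl
  rw [this, dm_homog_smul hD, hinv, ← ha, ← hb, mul_pow]
  ring

theorem dm_proj {K : Type} [Field K] {n : ℕ} (W : Submodule K (Fin n → K)) :
    ∃ (C : Matrix (Fin n) (Fin (Module.finrank K W)) K) (R : Matrix (Fin (Module.finrank K W)) (Fin n) K),
      R * C = 1 ∧ (∀ x, C *ᵥ x ∈ W) ∧ ∀ x ∈ W, C *ᵥ (R *ᵥ x) = x := by
  obtain ⟨p, hp⟩ := LinearMap.exists_leftInverse_of_injective W.subtype (by simp)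
  let b := Module.finBasis K W
  let e := b.equivFun
  have hpx : ∀ x : W, p x = x := fun x => DFunLike.congr_fun hp x
  refine ⟨LinearMap.toMatrix' (W.subtype ∘ₗ e.symm.toLinearMap),
    LinearMap.toMatrix' (e.toLinearMap ∘ₗ p), ?_, ?_, ?_⟩
  · rw [← LinearMap.toMatrix'_comp, ← LinearMap.toMatrix'_id]
    congr 1
    apply LinearMap.ext
    intro x
    simp [hpx]
  · intro x
    rw [LinearMap.toMatrix'_mulVec]
    exact (e.symm x).2
  · intro x hx
    rw [LinearMap.toMatrix'_mulVec, LinearMap.toMatrix'_mulVec]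
    have := hpx ⟨x, hx⟩
    simp only [LinearMap.coe_comp, Function.comp_apply]
    change W.subtype (e.symm (e (p x))) = x
    rw [LinearEquiv.symm_apply_apply]
    exact congrArg Subtype.val this

theorem dm_det_proj {K : Type} [Field K] {n w : ℕ} (C : Matrix (Fin n) (Fin w) K)
    (R : Matrix (Fin w) (Fin n) K) (h : R * C = 1) (t : K) :
    (1 + (t - 1) • (C * R)).det = t ^ w := by
  rw [← Matrix.smul_mul, det_one_add_mul_comm, Matrix.mul_smul, h]
  have : (1 : Matrix (Fin w) (Fin w) K) + (t - 1) • 1 = t • 1 := by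
    rw [sub_smul, one_smul]; abel
  rw [this, det_smul, det_one, mul_one, Fintype.card_fin]

theorem dm_null {K : Type} [Field K] [IsAlgClosed K] {n m : ℕ}
    {g : MvPolynomial (Fin m × Fin n × Fin n) K} (hg : g ∈ matrixSemiInvariants K n m) {D : ℕ}
    (hD : g.IsHomogeneous D) (hD0 : 0 < D)
    (v : Fin m → Matrix (Fin n) (Fin n) K) (U : Submodule K (Fin n → K))
    (hU : Module.finrank K (⨆ k, U.map (v k).mulVecLin : Submodule K (Fin n → K)) <
      Module.finrank K U) :
    aeval (matCoords v) g = 0 := by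
  have hn : 0 < n := by
    rcases Nat.eq_zero_or_pos n with rfl | h
    · have h1 : Module.finrank K U = 0 := Module.finrank_zero_of_subsingleton
      omega
    · exact h
  set W : Submodule K (Fin n → K) := ⨆ k, U.map (v k).mulVecLin with hW
  obtain ⟨CU, RU, hU1, hU2, hU3⟩ := dm_proj U
  obtain ⟨CW, RW, hW1, hW2, hW3⟩ := dm_proj W
  have hcomm : ∀ k, (CW * RW) * (v k) * (CU * RU) = v k * (CU * RU) := by
    intro k
    apply Matrix.mulVec_injective
    funext x
    simp only [← mulVec_mulVec]
    apply hW3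
    exact (le_iSup (fun k => U.map (v k).mulVecLin) k) ⟨_, hU2 _, rfl⟩
  have hAXB : ∀ t : K, t ≠ 0 → ∀ k, (1 + (t - 1) • (CW * RW)) * v k * (1 + (t⁻¹ - 1) • (CU * RU)) =
      v k + (t - 1) • ((CW * RW) * v k - v k * (CU * RU)) := by
    intro t ht k
    have h := hcomm k
    generalize CW * RW = p at *
    generalize CU * RU = q at *
    have : (1 + (t - 1) • p) * v k * (1 + (t⁻¹ - 1) • q) =
      v k + (t - 1) • (p * v k) + (t⁻¹ - 1) • (v k * q) + ((t - 1) * (t⁻¹ - 1)) • (p * v k * q) := by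
      simp only [add_mul, mul_add, one_mul, mul_one, smul_mul_assoc, mul_smul_comm, smul_smul,
        smul_add]
      module
    rw [this, h, smul_sub, add_assoc, ← add_smul]
    have h2 : (t⁻¹ - 1) + (t - 1) * (t⁻¹ - 1) = -(t - 1) := by field_simp; ring
    rw [h2, neg_smul]
    abel
  let Y : Fin m → Matrix (Fin n) (Fin n) K := fun k => (CW * RW) * v k - v k * (CU * RU)
  let P : Polynomial K := aeval (fun p => Polynomial.C (matCoords v p) +
    (Polynomial.X - 1) * Polynomial.C (matCoords Y p)) g
  have hP : ∀ t : K, P.eval t = aeval (matCoords fun k => v k + (t - 1) • Y k) g := by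
    intro t
    have : (Polynomial.aeval t : Polynomial K →ₐ[K] K).comp (aeval (fun p => Polynomial.C (matCoords v p) +
      (Polynomial.X - 1) * Polynomial.C (matCoords Y p)) : MvPolynomial (Fin m × Fin n × Fin n) K →ₐ[K] Polynomial K) =
        aeval (matCoords fun k => v k + (t - 1) • Y k) := by
      ext p : 1
      simp [matCoords]
    have h2 := DFunLike.congr_fun this g
    rw [← h2]
    simp [P, Polynomial.coe_aeval_eq_eval]
  obtain ⟨c, hc⟩ : ∃ c, Module.finrank K U = Module.finrank K W + c + 1 := by
    obtain ⟨c, hc⟩ := Nat.exists_eq_add_of_lt hU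
    exact ⟨c, hc⟩
  let Q : Polynomial K := P ^ n * Polynomial.X ^ ((c + 1) * D) - Polynomial.C ((aeval (matCoords v) g) ^ n)
  have hQ : ∀ t : K, t ≠ 0 → Q.eval t = 0 := by
    intro t ht
    have h1 := dm_inv_gl hn hg hD (1 + (t - 1) • (CW * RW)) (1 + (t⁻¹ - 1) • (CU * RU))
      (by rw [dm_det_proj _ _ hW1]; exact pow_ne_zero _ ht)
      (by rw [dm_det_proj _ _ hU1]; exact pow_ne_zero _ (inv_ne_zero ht)) v
    rw [dm_det_proj _ _ hW1, dm_det_proj _ _ hU1] at h1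
    simp only [hAXB t ht] at h1
    simp only [Q, Polynomial.eval_sub, Polynomial.eval_mul, Polynomial.eval_pow, Polynomial.eval_X,
      Polynomial.eval_C, hP]
    rw [h1, hc]
    have : (t ^ Module.finrank K W * t⁻¹ ^ (Module.finrank K W + c + 1)) ^ D * t ^ ((c + 1) * D) = 1 := by
      rw [pow_mul, ← mul_pow]
      have : t ^ Module.finrank K W * t⁻¹ ^ (Module.finrank K W + c + 1) * t ^ (c + 1) = 1 := by
        rw [mul_right_comm, ← pow_add, ← add_assoc, ← mul_pow, mul_inv_cancel₀ ht, one_pow]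
      rw [this, one_pow]
    linear_combination (aeval (matCoords v) g) ^ n * this
  have hQ0 : Q = 0 := by
    apply Polynomial.eq_zero_of_infinite_isRoot
    apply Set.Infinite.mono (s := {0}ᶜ)
    · intro t ht; exact hQ t ht
    · exact (Set.finite_singleton 0).infinite_compl
  have h0 := congrArg (Polynomial.eval 0) hQ0
  have : (c + 1) * D ≠ 0 := by positivity
  simp [Q, this] at h0
  exact h0.1

theorem dm_rank_iff {L : Type*} [Field L] {a b : Type*} [Fintype a] [Fintype b] [DecidableEq a]
    [DecidableEq b] (M : Matrix a b L) (ρ : ℕ) :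
    ρ ≤ M.rank ↔ ∃ (P : Matrix (Fin ρ) a L) (Q : Matrix b (Fin ρ) L), P * M * Q = 1 := by
  constructor
  · intro h
    rw [Matrix.rank] at h
    obtain ⟨f, hf⟩ : ∃ f : (Fin ρ → L) →ₗ[L] LinearMap.range M.mulVecLin, Function.Injective f := by
      refine finrank_le_iff_exists_linearMap.mp ?_
      rw [Module.finrank_fin_fun]
      exact h
    obtain ⟨g, hg⟩ := LinearMap.exists_rightInverse_of_surjective M.mulVecLin.rangeRestrict
      (LinearMap.range_rangeRestrict _)
    have hinj : Function.Injective ((LinearMap.range M.mulVecLin).subtype ∘ₗ f) :=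
      (Submodule.injective_subtype _).comp hf
    obtain ⟨p, hp⟩ := LinearMap.exists_leftInverse_of_injective _ (LinearMap.ker_eq_bot.mpr hinj)
    refine ⟨LinearMap.toMatrix' p, LinearMap.toMatrix' (g ∘ₗ f), ?_⟩
    have hM : M = LinearMap.toMatrix' M.mulVecLin := by
      rw [← Matrix.toLin'_apply', LinearMap.toMatrix'_toLin']
    calc _ = LinearMap.toMatrix' p * LinearMap.toMatrix' M.mulVecLin * LinearMap.toMatrix' (g ∘ₗ f) := by
            rw [← hM]
      _ = 1 := ?_
    rw [← LinearMap.toMatrix'_comp, ← LinearMap.toMatrix'_comp, ← LinearMap.toMatrix'_id, ← hp]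
    congr 1
    apply LinearMap.ext
    intro x
    simp only [LinearMap.comp_apply]
    congr 1
    have := DFunLike.congr_fun hg (f x)
    exact congrArg Subtype.val this
  · rintro ⟨P, Q, h⟩
    have h1 := Matrix.rank_mul_le_left (P * M) Q
    have h2 := Matrix.rank_mul_le_right P M
    rw [h, Matrix.rank_one, Fintype.card_fin] at h1
    omega

theorem dm_generic {L : Type*} [Field L] {a b s : Type*} [Fintype a] [Fintype b] [DecidableEq a]
    [DecidableEq b] [Fintype s] [DecidableEq s] (Φ : (s → L) →ₗ[L] Matrix a b L) (x : s → L) (ρ : ℕ)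
    (h : ρ ≤ (Φ x).rank) :
    ∃ p : MvPolynomial s L, p ≠ 0 ∧ ∀ y, eval y p ≠ 0 → ρ ≤ (Φ y).rank := by
  obtain ⟨P, Q, hPQ⟩ := (dm_rank_iff _ _).mp h
  let M : Matrix a b (MvPolynomial s L) := of fun i j => ∑ t, X t * C (Φ (Pi.single t 1) i j)
  have hM : ∀ y, M.map (eval y) = Φ y := by
    intro y
    have hy : Φ y = ∑ t, y t • Φ (Pi.single t 1) := by
      conv_lhs => rw [pi_eq_sum_univ' y]
      rw [map_sum]
      refine Finset.sum_congr rfl fun t _ => ?_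
      rw [map_smul]
    ext i j
    rw [hy]
    simp [M, Matrix.sum_apply]
  let p := (P.map (C (σ := s)) * M * Q.map (C (σ := s))).det
  have hp : ∀ y, eval y p = (P * Φ y * Q).det := by
    intro y
    rw [← hM, RingHom.map_det]
    congr 1
    simp only [RingHom.mapMatrix_apply, Matrix.map_mul, Matrix.map_map]
    congr 1
    · congr 1
      ext i j; simp
    · ext i j; simp
  refine ⟨p, ?_, ?_⟩
  · intro h0
    have := hp x
    rw [h0, hPQ] at this
    simp at this
  · intro y hy
    rw [hp] at hy
    have h3 : IsUnit (P * Φ y * Q) := (Matrix.isUnit_iff_isUnit_det _).mpr hy.isUnit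
    have h4 := Matrix.rank_of_isUnit _ h3
    rw [Fintype.card_fin] at h4
    have h1 := Matrix.rank_mul_le_left (P * Φ y) Q
    have h2 := Matrix.rank_mul_le_right P (Φ y)
    omega

theorem dm_nonvanish (K : Type*) {L : Type*} [Field K] [Infinite K] [Field L] [Algebra K L] {s : Type*} [Finite s]
    (p : MvPolynomial s L) (hp : p ≠ 0) : ∃ y : s → K, eval (fun t => algebraMap K L (y t)) p ≠ 0 := by
  by_contra! hcon
  apply hp
  apply MvPolynomial.funext_set (fun _ : s => Set.range (algebraMap K L))
    (fun _ => Set.infinite_range_of_injective (algebraMap K L).injective)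
  intro x hx
  have : ∀ i, ∃ y, algebraMap K L y = x i := fun i => hx i (Set.mem_univ i)
  choose y hy using this
  have := hcon y
  simp only [hy] at this
  simpa using this

theorem dm_generic_two (K : Type*) {L : Type*} [Field K] [Infinite K] [Field L] [Algebra K L]
    {a b a' b' s : Type*} [Fintype a] [Fintype b] [DecidableEq a]
    [DecidableEq b] [Fintype a'] [Fintype b'] [DecidableEq a']
    [DecidableEq b'] [Fintype s] [DecidableEq s] (Φ : (s → L) →ₗ[L] Matrix a b L)
    (Ψ : (s → L) →ₗ[L] Matrix a' b' L) (x y : s → L) (ρ τ : ℕ)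
    (h : ρ ≤ (Φ x).rank) (h' : τ ≤ (Ψ y).rank) :
    ∃ z : s → K, ρ ≤ (Φ (fun t => algebraMap K L (z t))).rank ∧
      τ ≤ (Ψ (fun t => algebraMap K L (z t))).rank := by
  obtain ⟨p, hp0, hp⟩ := dm_generic Φ x ρ h
  obtain ⟨q, hq0, hq⟩ := dm_generic Ψ y τ h'
  obtain ⟨z, hz⟩ := dm_nonvanish K (p * q) (mul_ne_zero hp0 hq0)
  rw [map_mul] at hz
  exact ⟨z, hp _ (left_ne_zero_of_mul hz), hq _ (right_ne_zero_of_mul hz)⟩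

theorem dm_generic_one (K : Type*) {L : Type*} [Field K] [Infinite K] [Field L] [Algebra K L]
    {a b s : Type*} [Fintype a] [Fintype b] [DecidableEq a]
    [DecidableEq b] [Fintype s] [DecidableEq s] (Φ : (s → L) →ₗ[L] Matrix a b L)
    (x : s → L) (ρ : ℕ) (h : ρ ≤ (Φ x).rank) :
    ∃ z : s → K, ρ ≤ (Φ (fun t => algebraMap K L (z t))).rank := by
  obtain ⟨z, hz, _⟩ := dm_generic_two K Φ Φ x x ρ ρ h h
  exact ⟨z, hz⟩

theorem dm_rank_map {K L : Type*} [Field K] [Field L] [Algebra K L]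
    {a b : Type*} [Fintype a] [Fintype b] [DecidableEq a] [DecidableEq b] (M : Matrix a b K) :
    (M.map (algebraMap K L)).rank = M.rank := by
  apply le_antisymm
  · -- rank of a factorisation
    obtain ⟨B, C, hBC⟩ : ∃ (B : Matrix a (Fin M.rank) K) (C : Matrix (Fin M.rank) b K), M = B * C := by
      let e := Module.finBasis K (LinearMap.range M.mulVecLin)
      let f := e.equivFun
      refine ⟨LinearMap.toMatrix' ((LinearMap.range M.mulVecLin).subtype ∘ₗ f.symm.toLinearMap),
        LinearMap.toMatrix' (f.toLinearMap ∘ₗ M.mulVecLin.rangeRestrict), ?_⟩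
      rw [← LinearMap.toMatrix'_comp]
      have hM : M = LinearMap.toMatrix' M.mulVecLin := by
        rw [← Matrix.toLin'_apply', LinearMap.toMatrix'_toLin']
      conv_lhs => rw [hM]
      congr 1
      apply LinearMap.ext
      intro x
      change M *ᵥ x = (f.symm (f (M.mulVecLin.rangeRestrict x))).1
      rw [LinearEquiv.symm_apply_apply]
      rfl
    have h1 : (M.map (algebraMap K L)) = B.map (algebraMap K L) * C.map (algebraMap K L) := by
      rw [← Matrix.map_mul, ← hBC]
    rw [h1]
    refine (Matrix.rank_mul_le_left _ _).trans ?_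
    refine (Matrix.rank_le_card_width _).trans ?_
    rw [Fintype.card_fin]
  · rw [dm_rank_iff]
    obtain ⟨P, Q, h⟩ := (dm_rank_iff M _).mp le_rfl
    refine ⟨P.map (algebraMap K L), Q.map (algebraMap K L), ?_⟩
    rw [← Matrix.map_mul, ← Matrix.map_mul, h]
    simp

theorem dm_kerbasis {K : Type*} [Field K] {a c : Type*} [Fintype a] [DecidableEq a] [Fintype c]
    (A : Matrix c a K) :
    ∃ (C : Matrix a (Fin (Module.finrank K (LinearMap.ker A.mulVecLin))) K)
      (R : Matrix (Fin (Module.finrank K (LinearMap.ker A.mulVecLin))) a K),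
      R * C = 1 ∧ A * C = 0 ∧ ∀ x, A *ᵥ x = 0 → C *ᵥ (R *ᵥ x) = x := by
  set W := LinearMap.ker A.mulVecLin with hW
  obtain ⟨p, hp⟩ := LinearMap.exists_leftInverse_of_injective W.subtype (by simp)
  let b := Module.finBasis K W
  let e := b.equivFun
  have hpx : ∀ x : W, p x = x := fun x => DFunLike.congr_fun hp x
  refine ⟨LinearMap.toMatrix' (W.subtype ∘ₗ e.symm.toLinearMap),
    LinearMap.toMatrix' (e.toLinearMap ∘ₗ p), ?_, ?_, ?_⟩
  · rw [← LinearMap.toMatrix'_comp, ← LinearMap.toMatrix'_id]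
    congr 1
    apply LinearMap.ext
    intro x
    simp [hpx]
  · apply Matrix.mulVec_injective
    funext x
    rw [← mulVec_mulVec, LinearMap.toMatrix'_mulVec, zero_mulVec]
    exact (e.symm x).2
  · intro x hx
    rw [LinearMap.toMatrix'_mulVec, LinearMap.toMatrix'_mulVec]
    have := hpx ⟨x, hx⟩
    simp only [LinearMap.coe_comp, Function.comp_apply]
    change W.subtype (e.symm (e (p x))) = x
    rw [LinearEquiv.symm_apply_apply]
    exact congrArg Subtype.val this

theorem dm_semilin {L : Type*} [Field L] (σ : L →+* L) {a : Type*} [Fintype a] [DecidableEq a]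
    (A Q : Matrix a a L) (s : L) (d : ℕ) (hσ : ∀ x, σ^[d] x = x) (hQσ : Q.map σ = Q)
    (hQ : Q ^ d = s • (1 : Matrix a a L)) (hA : A * Q = Q * A.map σ) :
    ∃ p : L, s ^ (Module.finrank L (LinearMap.ker A.mulVecLin)) =
      ∏ i ∈ Finset.range d, σ^[i] p := by
  obtain ⟨B, B', h1, h2, h3⟩ := dm_kerbasis A
  have h3' : ∀ {b : Type} [Fintype b] [DecidableEq b] (M : Matrix a b L), A * M = 0 → B * (B' * M) = M := by
    intro b _ _ M hM
    apply Matrix.mulVec_injective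
    funext x
    rw [← mulVec_mulVec, ← mulVec_mulVec]
    apply h3
    rw [mulVec_mulVec, hM, zero_mulVec]
  let P := B' * (Q * B.map σ)
  have hP : Q * B.map σ = B * P := by
    symm
    apply h3'
    rw [← Matrix.mul_assoc, hA, Matrix.mul_assoc, ← Matrix.map_mul, h2]
    simp
  have hiter : ∀ j : ℕ, ∃ Pj : Matrix (Fin (Module.finrank L (LinearMap.ker A.mulVecLin))) (Fin (Module.finrank L (LinearMap.ker A.mulVecLin))) L, Q ^ j * B.map (σ^[j]) = B * Pj ∧
      Pj.det = ∏ i ∈ Finset.range j, σ^[i] P.det := by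
    intro j
    induction j with
    | zero => exact ⟨1, by simp, by simp⟩
    | succ j ih =>
      obtain ⟨Pj, hj1, hj2⟩ := ih
      refine ⟨P * Pj.map σ, ?_, ?_⟩
      · have e1 : B.map (σ^[j+1]) = (B.map σ^[j]).map σ := by
          ext i k
          simp only [Matrix.map_apply, Function.iterate_succ_apply']
        have e2 : (Q ^ j).map σ = Q ^ j := by
          have := map_pow σ.mapMatrix Q j
          simp only [RingHom.mapMatrix_apply] at this
          rw [this, hQσ]
        rw [e1, pow_succ', Matrix.mul_assoc, ← Matrix.mul_assoc B, ← hP, Matrix.mul_assoc Q (B.map σ), ← Matrix.map_mul, ← hj1,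
          Matrix.map_mul, e2]
      · have e3 : (Pj.map σ).det = σ Pj.det := by
          rw [RingHom.map_det]; rfl
        rw [det_mul, e3, hj2, map_prod, Finset.prod_range_succ', mul_comm]
        simp only [Function.iterate_succ_apply', Function.iterate_zero, id]
  obtain ⟨Pd, hd1, hd2⟩ := hiter d
  refine ⟨P.det, ?_⟩
  rw [← hd2]
  have e4 : B.map (σ^[d]) = B := by
    ext i k; simp [hσ]
  rw [hQ, e4, Matrix.smul_mul, Matrix.one_mul] at hd1
  have e5 : s • (1 : Matrix (Fin (Module.finrank L (LinearMap.ker A.mulVecLin))) _ L) = Pd := by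
    rw [← h1, ← Matrix.mul_smul, hd1, ← Matrix.mul_assoc, h1, Matrix.one_mul]
  rw [← e5, det_smul, det_one, mul_one, Fintype.card_fin]

theorem dm_field (K : Type) [Field K] (d : ℕ) [NeZero d] :
    ∃ (L : Type) (_ : Field L) (_ : Algebra K L) (σ : L →+* L) (x : ZMod d → L) (s : L),
      (∀ y, σ^[d] y = y) ∧ (∀ c : K, σ (algebraMap K L c) = algebraMap K L c) ∧ σ s = s ∧ s ≠ 0 ∧
      (∀ i, σ (x (i + 1)) = x i) ∧ Function.Injective x ∧
      ∀ (w : ℕ) (p : L), s ^ w = ∏ i ∈ Finset.range d, σ^[i] p → d ∣ w := by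
  let A0 := Polynomial (MvPolynomial (ZMod d) K)
  let r : MvPolynomial (ZMod d) K →ₐ[K] MvPolynomial (ZMod d) K := rename (fun i => i - 1)
  have hr : Function.Injective r := rename_injective _ (sub_left_injective)
  let τ : A0 →+* A0 := Polynomial.mapRingHom r.toRingHom
  have hτ : Function.Injective τ := Polynomial.map_injective _ hr
  let L := FractionRing A0
  let σ : L →+* L := IsFractionRing.map (K := L) (L := L) hτ
  have hσ : ∀ a : A0, σ (algebraMap A0 L a) = algebraMap A0 L (τ a) := by
    intro a
    exact IsLocalization.map_eq _ a
  have hinj : Function.Injective (algebraMap A0 L) := IsFractionRing.injective A0 L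
  have hσi : ∀ (i : ℕ) (a : A0), σ^[i] (algebraMap A0 L a) = algebraMap A0 L (τ^[i] a) := by
    intro i
    induction i with
    | zero => intro a; rfl
    | succ i ih => intro a; rw [Function.iterate_succ_apply, hσ, ih, Function.iterate_succ_apply]
  have hdiv : ∀ (i : ℕ) (y z : L), σ^[i] (y / z) = σ^[i] y / σ^[i] z := by
    intro i y z
    rw [← RingHom.coe_pow, map_div₀]
  have hri : ∀ (i : ℕ) (a : MvPolynomial (ZMod d) K), r^[i] a = rename (fun t => t - (i : ZMod d)) a := by
    intro i
    induction i with
    | zero => intro a; simp only [Nat.cast_zero, sub_zero]; exact (rename_id_apply a).symm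
    | succ i ih =>
      intro a
      rw [Function.iterate_succ_apply, ih]
      simp only [r, rename_rename]
      congr 2
      funext t
      simp only [Function.comp]; push_cast; ring
  have hτi : ∀ (i : ℕ) (a : A0) (k : ℕ), (τ^[i] a).coeff k = r^[i] (a.coeff k) := by
    intro i
    induction i with
    | zero => intro a k; rfl
    | succ i ih =>
      intro a k
      rw [Function.iterate_succ_apply, ih, Function.iterate_succ_apply]
      congr 1
      exact Polynomial.coeff_map _ _
  have hτd : ∀ a : A0, τ^[d] a = a := by
    intro a
    apply Polynomial.ext
    intro k
    rw [hτi, hri]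
    have : (fun t : ZMod d => t - (d : ZMod d)) = id := by funext t; simp
    rw [this, rename_id]; rfl
  have hτdeg : ∀ (i : ℕ) (a : A0), Polynomial.natDegree (τ^[i] a) = Polynomial.natDegree a := by
    intro i
    induction i with
    | zero => intro a; rfl
    | succ i ih =>
      intro a
      rw [Function.iterate_succ_apply, ih]
      exact Polynomial.natDegree_map_eq_of_injective hr a
  have hτ0 : ∀ (i : ℕ) (a : A0), a ≠ 0 → τ^[i] a ≠ 0 := by
    intro i a ha h
    apply ha
    have := hτ.iterate i
    apply this
    rw [h, ← RingHom.coe_pow, map_zero]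
  refine ⟨L, inferInstance, inferInstance, σ, fun i => algebraMap A0 L (Polynomial.C (X i)),
    algebraMap A0 L Polynomial.X, ?_, ?_, ?_, ?_, ?_, ?_, ?_⟩
  · intro y
    obtain ⟨a, b, hb, rfl⟩ := IsFractionRing.div_surjective (A := A0) y
    rw [hdiv, hσi, hσi, hτd, hτd]
  · intro c
    rw [IsScalarTower.algebraMap_apply K A0 L, hσ]
    congr 1
    change Polynomial.map r.toRingHom (Polynomial.C (C c)) = Polynomial.C (C c)
    rw [Polynomial.map_C]
    simp [r]
  · rw [hσ]
    congr 1
    exact Polynomial.map_X _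
  · intro h
    rw [← map_zero (algebraMap A0 L)] at h
    exact Polynomial.X_ne_zero (hinj h)
  · intro i
    rw [hσ]
    congr 1
    change Polynomial.map r.toRingHom (Polynomial.C (X (i + 1))) = Polynomial.C (X i)
    rw [Polynomial.map_C]
    simp [r]
  · intro i j h
    exact X_injective (Polynomial.C_injective (hinj h))
  · intro w p hp
    have hp0 : p ≠ 0 := by
      rintro rfl
      have : ∏ i ∈ Finset.range d, σ^[i] (0 : L) = 0 := by
        apply Finset.prod_eq_zero (i := 0) (by simp [Nat.pos_of_neZero])
        rfl
      rw [this] at hp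
      have h2 := eq_zero_of_pow_eq_zero hp
      rw [← map_zero (algebraMap A0 L)] at h2
      exact Polynomial.X_ne_zero (hinj h2)
    obtain ⟨a, b, hb, rfl⟩ := IsFractionRing.div_surjective (A := A0) p
    have hb0 : b ≠ 0 := nonZeroDivisors.ne_zero hb
    have ha0 : a ≠ 0 := by rintro rfl; simp at hp0
    simp only [hdiv, hσi] at hp
    rw [Finset.prod_div_distrib, eq_div_iff] at hp
    swap
    · rw [Finset.prod_ne_zero_iff]
      intro i _ h
      rw [← map_zero (algebraMap A0 L)] at h
      exact hτ0 i b hb0 (hinj h)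
    rw [← map_prod, ← map_prod, ← map_pow, ← map_mul] at hp
    have hp' := congrArg Polynomial.natDegree (hinj hp)
    rw [Polynomial.natDegree_mul, Polynomial.natDegree_X_pow, Polynomial.natDegree_prod, Polynomial.natDegree_prod] at hp'
    · simp only [hτdeg, Finset.sum_const, Finset.card_range, smul_eq_mul] at hp'
      exact (Nat.dvd_add_left (Dvd.intro _ rfl)).mp (hp' ▸ Dvd.intro _ rfl)
    · intro i _; exact hτ0 i a ha0
    · intro i _; exact hτ0 i b hb0
    · exact pow_ne_zero _ Polynomial.X_ne_zero
    · rw [Finset.prod_ne_zero_iff]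
      intro i _; exact hτ0 i b hb0

noncomputable def dmBlow {F : Type*} [Field F] {ι n α β : Type*} [Fintype ι] (X : ι → Matrix n n F)
    (T : ι → Matrix α β F) : Matrix (n × α) (n × β) F :=
  of fun p q => ∑ k, X k p.1 q.1 * T k p.2 q.2

theorem dmBlow_kron {F : Type*} [Field F] {ι n α β : Type*} [Fintype ι] (X : ι → Matrix n n F)
    (T : ι → Matrix α β F) : dmBlow X T = ∑ k, Matrix.kroneckerMap (· * ·) (X k) (T k) := by
  ext p q
  simp [dmBlow, Matrix.sum_apply]

/-- weighted cyclic shift -/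
noncomputable def dmQ {L : Type*} [Field L] (d : ℕ) [NeZero d] (s : L) : Matrix (ZMod d) (ZMod d) L :=
  of fun i k => if k = i + 1 then (if i = 0 then s else 1) else 0

theorem dmQ_pow {L : Type*} [Field L] (d : ℕ) [NeZero d] (s : L) (j : ℕ) :
    (dmQ d s) ^ j = of fun i k : ZMod d => if k = i + (j : ZMod d) then
      ∏ t ∈ Finset.range j, (if i + (t : ZMod d) = 0 then s else 1) else 0 := by
  induction j with
  | zero =>
    ext i k
    simp [Matrix.one_apply, eq_comm]
  | succ j ih =>
    rw [pow_succ, ih]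
    ext i k
    simp only [Matrix.mul_apply, of_apply, dmQ, ite_mul, zero_mul, Finset.sum_ite_eq', Finset.sum_ite_eq,
      Finset.mem_univ, if_true, Finset.prod_range_succ]
    push_cast
    rw [← add_assoc]
    split_ifs <;> simp

theorem dmQ_pow_d {L : Type*} [Field L] (d : ℕ) [NeZero d] (s : L) :
    (dmQ d s) ^ d = s • (1 : Matrix (ZMod d) (ZMod d) L) := by
  rw [dmQ_pow]
  ext i k
  have h : ∏ t ∈ Finset.range d, (if i + (t : ZMod d) = 0 then s else 1) = s := by
    rw [Finset.prod_eq_single_of_mem (-i).val (Finset.mem_range.mpr (ZMod.val_lt _))]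
    · simp
    · intro t ht hne
      rw [if_neg]
      intro h
      apply hne
      have : (t : ZMod d) = -i := by rw [← sub_eq_zero, sub_neg_eq_add, add_comm]; exact h
      rw [← this, ZMod.val_natCast, Nat.mod_eq_of_lt (Finset.mem_range.mp ht)]
  simp only [of_apply, h, CharP.cast_eq_zero, add_zero, Matrix.smul_apply, Matrix.one_apply, smul_eq_mul,
    mul_ite, mul_one, mul_zero, eq_comm]

theorem dm_dense {L : Type*} [Field L] (d : ℕ) [NeZero d] (s : L) (hs : s ≠ 0) (x : ZMod d → L)
    (hx : Function.Injective x) (T : Matrix (ZMod d) (ZMod d) L) :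
    T ∈ Submodule.span L (Submonoid.closure {diagonal x, dmQ d s} : Set (Matrix (ZMod d) (ZMod d) L)) := by
  rw [← Algebra.adjoin_eq_span, Subalgebra.mem_toSubmodule]
  set S := Algebra.adjoin L {diagonal x, dmQ d s} with hS
  have hD : diagonal x ∈ S := Algebra.subset_adjoin (by simp)
  have hQ : dmQ d s ∈ S := Algebra.subset_adjoin (by simp)
  have hdiag : ∀ a : ZMod d, Matrix.single a a (1 : L) ∈ S := by
    intro a
    have h1 : (∏ k ∈ (Finset.univ.erase a), fun i => x i - x k) ≠ (0 : ZMod d → L) ∧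
      diagonal (∏ k ∈ (Finset.univ.erase a), fun i => x i - x k) ∈ S := by
      constructor
      · intro h
        have := congrFun h a
        rw [Finset.prod_apply, Pi.zero_apply, Finset.prod_eq_zero_iff] at this
        obtain ⟨k, hk, hk2⟩ := this
        exact (Finset.mem_erase.mp hk).1 (hx (sub_eq_zero.mp hk2)).symm
      · have h2 : ∀ u : Finset (ZMod d), diagonal (∏ k ∈ u, fun i => x i - x k) ∈ S := by
          intro u
          induction u using Finset.induction_on with
          | empty =>
            rw [Finset.prod_empty]
            have : (diagonal (1 : ZMod d → L)) = 1 := diagonal_one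
            rw [this]; exact S.one_mem
          | insert k u hk ih =>
            rw [Finset.prod_insert hk]
            have : diagonal ((fun i => x i - x k) * ∏ k ∈ u, fun i => x i - x k) =
              (diagonal x - algebraMap L _ (x k)) * diagonal (∏ k ∈ u, fun i => x i - x k) := by
              rw [Matrix.algebraMap_eq_diagonal, diagonal_sub, diagonal_mul_diagonal]
              rfl
            rw [this]
            exact S.mul_mem (S.sub_mem hD (S.algebraMap_mem _)) ih
        exact h2 _
    have h3 : Matrix.single a a (1 : L) = (∏ k ∈ (Finset.univ.erase a), (x a - x k))⁻¹ •
        diagonal (∏ k ∈ (Finset.univ.erase a), fun i => x i - x k) := by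
      have hne : (∏ k ∈ (Finset.univ.erase a), (x a - x k)) ≠ 0 := by
        rw [Finset.prod_ne_zero_iff]
        intro k hk h
        exact (Finset.mem_erase.mp hk).1 (hx (sub_eq_zero.mp h)).symm
      ext i j
      rw [Matrix.smul_apply, diagonal_apply, Matrix.single_apply, Finset.prod_apply]
      by_cases hij : i = j
      · subst hij
        by_cases hai : a = i
        · subst hai
          simp [hne]
        · have : ∏ k ∈ (Finset.univ.erase a), (x i - x k) = 0 :=
            Finset.prod_eq_zero (i := i) (by simp [Ne.symm hai]) (sub_self _)
          simp [hai, this]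
      · simp only [hij, if_false, smul_zero]
        rw [if_neg]
        rintro ⟨rfl, rfl⟩
        exact hij rfl
    rw [h3]
    exact S.smul_mem h1.2 _
  have hoff : ∀ (j : ℕ) (a : ZMod d), Matrix.single a (a + (j : ZMod d)) (1 : L) ∈ S := by
    intro j a
    have h1 : Matrix.single a (a + (j : ZMod d)) (1 : L) =
      ((dmQ d s ^ j) a (a + (j : ZMod d)))⁻¹ • (Matrix.single a a (1 : L) * (dmQ d s) ^ j) := by
      have hne : (dmQ d s ^ j) a (a + (j : ZMod d)) ≠ 0 := by
        rw [dmQ_pow]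
        simp only [of_apply, if_true]
        rw [Finset.prod_ne_zero_iff]
        intro t _
        split_ifs
        · exact hs
        · exact one_ne_zero
      ext i k
      rw [Matrix.smul_apply, Matrix.single_apply]
      by_cases hi : a = i
      · subst hi
        rw [Matrix.single_mul_apply_same, one_mul]
        by_cases hk : a + (j : ZMod d) = k
        · subst hk
          simp [hne]
        · have : (dmQ d s ^ j) a k = 0 := by
            rw [dmQ_pow]; simp [Ne.symm hk]
          simp [hk, this]
      · rw [Matrix.single_mul_apply_of_ne _ _ _ _ _ (Ne.symm hi)]
        simp [hi]
    rw [h1]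
    exact S.smul_mem (S.mul_mem (hdiag a) (S.pow_mem hQ _)) _
  rw [matrix_eq_sum_single T]
  refine S.sum_mem fun i _ => S.sum_mem fun j _ => ?_
  have : Matrix.single i j (T i j) = T i j • Matrix.single i (i + ((j - i).val : ZMod d)) (1 : L) := by
    simp
  rw [this]
  exact S.smul_mem (hoff _ _) _

theorem dm_regular {K : Type} [Field K] [Infinite K] {ι n : Type} [Fintype ι] [DecidableEq ι]
    [Fintype n] [DecidableEq n] (X : ι → Matrix n n K) (d : ℕ) [NeZero d] (ρ : ℕ)
    (hle : ∀ T : ι → Matrix (ZMod d) (ZMod d) K, (dmBlow X T).rank ≤ ρ)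
    (hex : ∃ T : ι → Matrix (ZMod d) (ZMod d) K, (dmBlow X T).rank = ρ) : d ∣ ρ := by
  obtain ⟨L, _, _, σ, x, s, hσd, hσK, hσs, hs, hσx, hx, hdvd⟩ := dm_field K d
  obtain ⟨T0, hT0⟩ := hex
  let XL : ι → Matrix n n L := fun k => (X k).map (algebraMap K L)
  have hmap : ∀ T : ι → Matrix (ZMod d) (ZMod d) K,
      dmBlow XL (fun k => (T k).map (algebraMap K L)) = (dmBlow X T).map (algebraMap K L) := by
    intro T
    ext p q
    simp [dmBlow, XL]
  have hleL : ∀ T : ι → Matrix (ZMod d) (ZMod d) L, (dmBlow XL T).rank ≤ ρ := by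
    intro T
    let Φ : (ι × ZMod d × ZMod d → L) →ₗ[L] Matrix (n × ZMod d) (n × ZMod d) L :=
      { toFun := fun t => dmBlow XL (fun k => of fun a b => t (k, a, b))
        map_add' := by
          intro t t'; ext p q
          simp [dmBlow, mul_add, Finset.sum_add_distrib]
        map_smul' := by
          intro c t; ext p q
          simp only [dmBlow, of_apply, Pi.smul_apply, smul_eq_mul, RingHom.id_apply, Matrix.smul_apply,
            Finset.mul_sum]
          exact Finset.sum_congr rfl fun _ _ => by ring }
    obtain ⟨z, hz⟩ := dm_generic_one K Φ (fun t => T t.1 t.2.1 t.2.2) _ le_rfl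
    have h1 : Φ (fun t => algebraMap K L (z t)) =
      (dmBlow X (fun k => of fun a b => z (k, a, b))).map (algebraMap K L) := by
      rw [← hmap]; rfl
    rw [h1, dm_rank_map] at hz
    exact hz.trans (hle _)
  obtain ⟨q, hq⟩ : ∃ q, q = dmQ d s := ⟨_, rfl⟩
  have hspan : ∀ k, (T0 k).map (algebraMap K L) ∈ Submodule.span L (Submonoid.closure {diagonal x, dmQ d s} : Set (Matrix (ZMod d) (ZMod d) L)) :=
    fun k => dm_dense d s hs x hx ((T0 k).map (algebraMap K L))
  rw [← hq] at hspan
  simp only [Submodule.mem_span_set'] at hspan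
  choose N c g hcg using hspan
  let Φ : ((Σ k, Fin (N k)) → L) →ₗ[L] Matrix (n × ZMod d) (n × ZMod d) L :=
      { toFun := fun t => dmBlow XL (fun k => ∑ i, t ⟨k, i⟩ • (g k i : Matrix (ZMod d) (ZMod d) L))
        map_add' := by
          intro t t'; ext p q
          simp [dmBlow, mul_add, Finset.sum_add_distrib, add_smul]
        map_smul' := by
          intro c t; ext p q
          simp only [dmBlow, of_apply, Pi.smul_apply, smul_eq_mul, RingHom.id_apply, Matrix.smul_apply,
            Finset.mul_sum, Matrix.sum_apply]
          exact Finset.sum_congr rfl fun _ _ => Finset.sum_congr rfl fun _ _ => by ring }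
  obtain ⟨z, hz⟩ := dm_generic_one K Φ (fun t => c t.1 t.2) ρ (by
    change ρ ≤ (dmBlow XL (fun k => ∑ i, c k i • (g k i : Matrix (ZMod d) (ZMod d) L))).rank
    simp only [hcg]
    rw [hmap, dm_rank_map, hT0])
  let T1 : ι → Matrix (ZMod d) (ZMod d) L :=
    fun k => ∑ i, algebraMap K L (z ⟨k, i⟩) • (g k i : Matrix (ZMod d) (ZMod d) L)
  have hz' : ρ ≤ (dmBlow XL T1).rank := hz
  have hrank : (dmBlow XL T1).rank = ρ := le_antisymm (hleL _) hz'
  have hqσ : q.map σ = q := by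
    ext i j
    simp only [hq, dmQ, Matrix.map_apply, of_apply]
    split_ifs <;> simp [hσs]
  have hclos : ∀ e ∈ Submonoid.closure {diagonal x, q}, e * q = q * e.map σ := by
    intro e he
    induction he using Submonoid.closure_induction with
    | mem e he =>
      rcases he with rfl | he
      · rw [diagonal_map (map_zero σ)]
        ext i j
        rw [diagonal_mul, mul_diagonal]
        simp only [hq, dmQ, of_apply, Function.comp]
        by_cases h : j = i + 1
        · subst h; simp only [hσx, if_true, mul_comm]
        · simp [h]
      · rw [Set.mem_singleton_iff] at he
        rw [he, hqσ]
    | one => simp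
    | mul e f _ _ he hf =>
      rw [Matrix.mul_assoc, hf, ← Matrix.mul_assoc, he, Matrix.map_mul, Matrix.mul_assoc]
  have hT1 : ∀ k, T1 k * q = q * (T1 k).map σ := by
    intro k
    have h1 : (T1 k).map σ = ∑ i, algebraMap K L (z ⟨k, i⟩) • (g k i : Matrix (ZMod d) (ZMod d) L).map σ := by
      ext a b
      simp only [T1, Matrix.sum_apply, map_apply, Matrix.smul_apply, smul_eq_mul, map_sum, map_mul, hσK]
    rw [h1]
    simp only [T1]
    rw [Finset.sum_mul, Finset.mul_sum]
    refine Finset.sum_congr rfl fun i _ => ?_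
    rw [Matrix.smul_mul, Matrix.mul_smul, hclos _ (g k i).2]
  let QQ : Matrix (n × ZMod d) (n × ZMod d) L := Matrix.kroneckerMap (· * ·) 1 q
  have hker := dm_semilin σ (dmBlow XL T1) QQ s d hσd
    (by
      ext p r
      have := congrFun (congrFun hqσ p.2) r.2
      simp only [map_apply] at this
      simp only [QQ, map_apply, kroneckerMap_apply, map_mul, this, Matrix.one_apply]
      split_ifs <;> simp)
    (by
      have hpow : ∀ j : ℕ, QQ ^ j = Matrix.kroneckerMap (· * ·) (1 : Matrix n n L) (q ^ j) := by
        intro j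
        induction j with
        | zero => simp
        | succ j ih =>
          rw [pow_succ, ih, pow_succ]
          rw [← Matrix.mul_kronecker_mul, Matrix.one_mul]
      rw [hpow, hq, dmQ_pow_d]
      rw [Matrix.kronecker_smul]
      simp)
    (by
      have h1 : (dmBlow XL T1).map σ = dmBlow XL (fun k => (T1 k).map σ) := by
        ext p r
        simp [dmBlow, XL, hσK]
      rw [h1, dmBlow_kron, dmBlow_kron, Finset.sum_mul, Finset.mul_sum]
      refine Finset.sum_congr rfl fun k _ => ?_
      rw [← Matrix.mul_kronecker_mul, ← Matrix.mul_kronecker_mul, hT1, Matrix.one_mul, Matrix.mul_one])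
  obtain ⟨p, hp⟩ := hker
  have hw := hdvd _ p hp
  have hrn := LinearMap.finrank_range_add_finrank_ker (dmBlow XL T1).mulVecLin
  rw [← Matrix.rank, hrank, Module.finrank_fintype_fun_eq_card, Fintype.card_prod, ZMod.card] at hrn
  exact (Nat.dvd_add_left hw).mp (hrn ▸ Dvd.intro_left _ rfl)

def dmZ {K V : Type*} [Field K] [AddCommGroup V] [Module K V] (A : V →ₗ[K] V) (B : ℕ → V →ₗ[K] V)
    (s : ℕ) : Submodule K (Fin s → V) where
  carrier := {y | (∀ i : Fin s, i.val = 0 → A (y i) = 0) ∧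
    ∀ i j : Fin s, i.val = j.val + 1 → A (y i) = B j.val (y j)}
  add_mem' := by
    rintro y z ⟨h1, h2⟩ ⟨h3, h4⟩
    refine ⟨fun i hi => ?_, fun i j hij => ?_⟩
    · simp [h1 i hi, h3 i hi]
    · simp [h2 i j hij, h4 i j hij]
  zero_mem' := by simp
  smul_mem' := by
    rintro c y ⟨h1, h2⟩
    refine ⟨fun i hi => ?_, fun i j hij => ?_⟩
    · simp [h1 i hi]
    · simp [h2 i j hij]

theorem dmZ_trunc {K V : Type*} [Field K] [AddCommGroup V] [Module K V] [FiniteDimensional K V]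
    (A : V →ₗ[K] V) (B : ℕ → V →ₗ[K] V)
    (h : ∀ s, s * Module.finrank K (LinearMap.ker A) ≤ Module.finrank K (dmZ A B s)) (s : ℕ)
    (y : Fin s → V) (hy : y ∈ dmZ A B s) :
    ∃ y' ∈ dmZ A B (s + 1), ∀ i, y' (Fin.castSucc i) = y i := by
  let tr : ∀ s, dmZ A B (s + 1) →ₗ[K] dmZ A B s := fun s =>
    { toFun := fun y => ⟨fun i => y.1 (Fin.castSucc i),
        fun i hi => y.2.1 _ hi, fun i j hij => y.2.2 (Fin.castSucc i) (Fin.castSucc j) hij⟩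
      map_add' := fun _ _ => rfl
      map_smul' := fun _ _ => rfl }
  have hker : ∀ s, Module.finrank K (LinearMap.ker (tr s)) ≤ Module.finrank K (LinearMap.ker A) := by
    intro s
    have h0 : ∀ (y : LinearMap.ker (tr s)) (i : Fin s), y.1.1 (Fin.castSucc i) = 0 := by
      intro y i
      have := y.2
      rw [LinearMap.mem_ker] at this
      exact congrFun (congrArg Subtype.val this) i
    let f : LinearMap.ker (tr s) →ₗ[K] LinearMap.ker A :=
      { toFun := fun y => ⟨y.1.1 (Fin.last s), by
          rw [LinearMap.mem_ker]
          rcases Nat.eq_zero_or_pos s with hs | hs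
          · exact y.1.2.1 _ (by simp [hs])
          · have := y.1.2.2 (Fin.last s) (Fin.castSucc ⟨s - 1, by omega⟩) (by simp; omega)
            rw [this, h0, map_zero]⟩
        map_add' := fun _ _ => rfl
        map_smul' := fun _ _ => rfl }
    apply LinearMap.finrank_le_finrank_of_injective (f := f)
    intro y y' hfy
    apply Subtype.ext
    apply Subtype.ext
    funext i
    refine Fin.lastCases ?_ (fun i => ?_) i
    · exact congrArg Subtype.val hfy
    · exact (h0 y i).trans (h0 y' i).symm
  have hub : ∀ s, Module.finrank K (dmZ A B s) ≤ s * Module.finrank K (LinearMap.ker A) := by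
    intro s
    induction s with
    | zero =>
      rw [Module.finrank_zero_of_subsingleton]; simp
    | succ s ih =>
      have h1 := LinearMap.finrank_range_add_finrank_ker (tr s)
      have h2 := hker s
      have h3 := Submodule.finrank_le (LinearMap.range (tr s))
      rw [add_mul, one_mul]
      omega
  have htop : LinearMap.range (tr s) = ⊤ := by
    apply Submodule.eq_top_of_finrank_eq
    apply le_antisymm (Submodule.finrank_le _)
    have h1 := LinearMap.finrank_range_add_finrank_ker (tr s)
    have h2 := hker s
    have h3 := h (s + 1)
    have h4 := hub s
    rw [add_mul, one_mul] at h3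
    omega
  have : (⟨y, hy⟩ : dmZ A B s) ∈ LinearMap.range (tr s) := htop ▸ Submodule.mem_top
  obtain ⟨y', hy'⟩ := this
  exact ⟨y'.1, y'.2, fun i => congrFun (congrArg Subtype.val hy') i⟩

theorem dm_wong_abs {K V : Type*} [Field K] [AddCommGroup V] [Module K V] [FiniteDimensional K V]
    (A : V →ₗ[K] V) (S : Set (V →ₗ[K] V)) (h0 : (0 : V →ₗ[K] V) ∈ S)
    (h : ∀ B : ℕ → V →ₗ[K] V, (∀ j, B j ∈ S) →
      ∀ s, s * Module.finrank K (LinearMap.ker A) ≤ Module.finrank K (dmZ A B s))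
    (hk : 0 < Module.finrank K (LinearMap.ker A)) :
    ∃ U W : Submodule K V, (∀ B ∈ S, U.map B ≤ W) ∧ Module.finrank K W < Module.finrank K U := by
  let R : Set V := {v | ∃ (B : ℕ → V →ₗ[K] V) (s : ℕ) (y : Fin (s + 1) → V), (∀ j, B j ∈ S) ∧
    y ∈ dmZ A B (s + 1) ∧ y (Fin.last s) = v}
  have hRker : ∀ v, A v = 0 → v ∈ R := by
    intro v hv
    refine ⟨fun _ => 0, 0, fun _ => v, fun _ => h0, ⟨fun i _ => hv, fun i j hij => ?_⟩, rfl⟩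
    have := i.2
    omega
  have hR : ∀ v ∈ R, ∀ C ∈ S, ∃ w ∈ R, A w = C v := by
    rintro v ⟨B, s, y, hB, hy, rfl⟩ C hC
    let B' : ℕ → V →ₗ[K] V := fun j => if j = s then C else B j
    have hB' : ∀ j, B' j ∈ S := by
      intro j
      simp only [B']
      split_ifs
      · exact hC
      · exact hB j
    have hy' : y ∈ dmZ A B' (s + 1) := by
      refine ⟨hy.1, fun i j hij => ?_⟩
      have : j.val ≠ s := by have := i.2; omega
      simp only [B', if_neg this]
      exact hy.2 i j hij
    obtain ⟨z, hz, hzy⟩ := dmZ_trunc A B' (h B' hB') _ y hy'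
    refine ⟨z (Fin.last _), ⟨B', s + 1, z, hB', hz, rfl⟩, ?_⟩
    have := hz.2 (Fin.last _) (Fin.castSucc (Fin.last s)) (by simp)
    rw [this, hzy]
    simp [B']
  let U := Submodule.span K R
  let W := Submodule.span K {w | ∃ C ∈ S, ∃ v ∈ R, w = C v}
  have hW : ∀ w ∈ W, ∃ u ∈ U, A u = w := by
    intro w hw
    induction hw using Submodule.span_induction with
    | mem w hw =>
      obtain ⟨C, hC, v, hv, rfl⟩ := hw
      obtain ⟨u, hu, hu2⟩ := hR v hv C hC
      exact ⟨u, Submodule.subset_span hu, hu2⟩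
    | zero => exact ⟨0, U.zero_mem, map_zero _⟩
    | add a b _ _ ha hb =>
      obtain ⟨u, hu, rfl⟩ := ha
      obtain ⟨u', hu', rfl⟩ := hb
      exact ⟨u + u', U.add_mem hu hu', map_add _ _ _⟩
    | smul c a _ ha =>
      obtain ⟨u, hu, rfl⟩ := ha
      exact ⟨c • u, U.smul_mem _ hu, map_smul _ _ _⟩
  refine ⟨U, W, ?_, ?_⟩
  · intro B hB
    rw [Submodule.map_span_le]
    intro v hv
    exact Submodule.subset_span ⟨B, hB, v, hv, rfl⟩
  · let f : U →ₗ[K] V := A ∘ₗ U.subtype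
    have h1 := LinearMap.finrank_range_add_finrank_ker f
    have h2 : Module.finrank K W ≤ Module.finrank K (LinearMap.range f) := by
      apply Submodule.finrank_mono
      intro w hw
      obtain ⟨u, hu, rfl⟩ := hW w hw
      exact ⟨⟨u, hu⟩, rfl⟩
    have h3 : Module.finrank K (LinearMap.ker A) ≤ Module.finrank K (LinearMap.ker f) := by
      let g : LinearMap.ker A →ₗ[K] LinearMap.ker f :=
        { toFun := fun v => ⟨⟨v.1, Submodule.subset_span (hRker v.1 v.2)⟩, v.2⟩
          map_add' := fun _ _ => rfl
          map_smul' := fun _ _ => rfl }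
      apply LinearMap.finrank_le_finrank_of_injective (f := g)
      intro a b hab
      apply Subtype.ext
      exact congrArg (fun z => z.1.1) hab
    omega

theorem dmBlow_mulVec {F : Type*} [Field F] {ι n α β : Type*} [Fintype ι] [Fintype n] [Fintype β]
    (X : ι → Matrix n n F) (T : ι → Matrix α β F) (y : n × β → F) (p : n × α) :
    (dmBlow X T *ᵥ y) p = ∑ q, (∑ k, X k p.1 q.1 * T k p.2 q.2) * y q := rfl

theorem dm_wong {K : Type} [Field K] {ι n : Type} [Fintype ι] [DecidableEq ι]
    [Fintype n] [DecidableEq n] (X : ι → Matrix n n K) {β : Type} [Fintype β] [DecidableEq β] [Nonempty β]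
    (T0 : ι → Matrix β β K) (k : ℕ) (hk : k < Fintype.card n)
    (hT0 : (dmBlow X T0).rank = k * Fintype.card β)
    (hmax : ∀ (γ : Type) [Fintype γ] [DecidableEq γ] (T : ι → Matrix γ γ K),
      (dmBlow X T).rank ≤ k * Fintype.card γ) :
    ∃ U : Submodule K (n → K), Module.finrank K (⨆ k, U.map (X k).mulVecLin : Submodule K (n → K)) <
      Module.finrank K U := by
  have hcard : 0 < Fintype.card β := Fintype.card_pos
  let A := (dmBlow X T0).mulVecLin
  have hAk := LinearMap.finrank_range_add_finrank_ker A
  rw [← Matrix.rank, hT0, Module.finrank_fintype_fun_eq_card, Fintype.card_prod] at hAk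
  have hkpos : 0 < Module.finrank K (LinearMap.ker A) := by
    have := Nat.mul_lt_mul_of_pos_right hk hcard
    omega
  obtain ⟨U, W, hUW, hlt⟩ := dm_wong_abs A {B | ∃ T : ι → Matrix β β K, B = (dmBlow X T).mulVecLin}
    ⟨0, by ext v p; simp [dmBlow_mulVec]⟩ (by
      intro B hB s
      choose T hT using hB
      let T' : ι → Matrix (β × Fin s) (β × Fin s) K := fun k => of fun a b =>
        if a.2 = b.2 then T0 k a.1 b.1 else if a.2.val = b.2.val + 1 then - T b.2.val k a.1 b.1 else 0
      have hr := hmax _ T'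
      have hk' := LinearMap.finrank_range_add_finrank_ker (dmBlow X T').mulVecLin
      rw [← Matrix.rank, Module.finrank_fintype_fun_eq_card, Fintype.card_prod] at hk'
      rw [Fintype.card_prod, Fintype.card_fin] at hr hk'
      have hle : Module.finrank K (LinearMap.ker (dmBlow X T').mulVecLin) ≤ Module.finrank K (dmZ A B s) := by
        have hcomp : ∀ (Y : n × (β × Fin s) → K) (p : n) (a : β) (i : Fin s),
            (dmBlow X T' *ᵥ Y) (p, (a, i)) = (dmBlow X T0 *ᵥ (fun q => Y (q.1, (q.2, i)))) (p, a) -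
              ∑ j : Fin s, if i.val = j.val + 1 then (dmBlow X (T j.val) *ᵥ (fun q => Y (q.1, (q.2, j)))) (p, a) else 0 := by
          intro Y p a i
          have hl : (dmBlow X T' *ᵥ Y) (p, (a, i)) = ∑ j : Fin s, ∑ q : n × β, (∑ k, X k p q.1 * T' k (a, i) (q.2, j)) * Y (q.1, (q.2, j)) := by
            rw [dmBlow_mulVec, Finset.sum_comm, Fintype.sum_prod_type, Fintype.sum_prod_type]
            refine Finset.sum_congr rfl fun q _ => ?_
            rw [Fintype.sum_prod_type]
          have hr : (dmBlow X T0 *ᵥ (fun q => Y (q.1, (q.2, i)))) (p, a) =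
              ∑ j : Fin s, if i = j then (dmBlow X T0 *ᵥ (fun q => Y (q.1, (q.2, j)))) (p, a) else 0 := by
            simp
          rw [hl, hr, ← Finset.sum_sub_distrib]
          refine Finset.sum_congr rfl fun j _ => ?_
          by_cases hij : i = j
          · subst hij
            simp [T', dmBlow_mulVec]
          · by_cases hij2 : i.val = j.val + 1
            · simp only [T', dmBlow_mulVec, hij, if_false, hij2, if_true, of_apply, zero_sub, mul_neg,
                Finset.sum_neg_distrib, neg_mul]
            · simp [T', hij, hij2]
        let f : LinearMap.ker (dmBlow X T').mulVecLin →ₗ[K] dmZ A B s :=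
          { toFun := fun Y => ⟨fun i q => Y.1 (q.1, (q.2, i)), by
              have hY : dmBlow X T' *ᵥ Y.1 = 0 := Y.2
              refine ⟨fun i hi => ?_, fun i j hij => ?_⟩
              · funext pa
                have := hcomp Y.1 pa.1 pa.2 i
                rw [hY] at this
                simp only [hi, Pi.zero_apply] at this
                simp at this
                exact this.symm
              · funext pa
                have := hcomp Y.1 pa.1 pa.2 i
                rw [hY, Finset.sum_eq_single j] at this
                · rw [if_pos hij, Pi.zero_apply, eq_comm, sub_eq_zero] at this
                  rw [hT]
                  exact this
                · intro j' _ hj'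
                  rw [if_neg]
                  intro h
                  exact hj' (Fin.ext (by omega))
                · simp⟩
            map_add' := fun _ _ => rfl
            map_smul' := fun _ _ => rfl }
        apply LinearMap.finrank_le_finrank_of_injective (f := f)
        intro Y Y' h
        apply Subtype.ext
        funext q
        exact congrFun (congrFun (congrArg Subtype.val h) q.2.2) (q.1, q.2.1)
      refine le_trans ?_ hle
      have e1 : s * (k * Fintype.card β + Module.finrank K (LinearMap.ker A)) =
        Fintype.card n * (Fintype.card β * s) := by rw [hAk]; ring
      have e2 : k * (Fintype.card β * s) = s * (k * Fintype.card β) := by ring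
      rw [mul_add] at e1
      omega) hkpos
  let sl : β → (n × β → K) →ₗ[K] (n → K) := fun b => LinearMap.funLeft K K (fun p => (p, b))
  let U0 : Submodule K (n → K) := ⨆ b, U.map (sl b)
  refine ⟨U0, ?_⟩
  have hd1 : Module.finrank K U ≤ Fintype.card β * Module.finrank K U0 := by
    let f : U →ₗ[K] (β → U0) :=
      { toFun := fun v b => ⟨sl b v.1, (le_iSup (fun b => U.map (sl b)) b) ⟨v.1, v.2, rfl⟩⟩
        map_add' := fun _ _ => rfl
        map_smul' := fun _ _ => rfl }
    have := LinearMap.finrank_le_finrank_of_injective (f := f) (by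
      intro v w h
      apply Subtype.ext
      funext q
      exact congrFun (congrArg Subtype.val (congrFun h q.2)) q.1)
    rwa [Module.finrank_pi_fintype, Finset.sum_const, Finset.card_univ, smul_eq_mul] at this
  set XU : Submodule K (n → K) := ⨆ k, U0.map (X k).mulVecLin with hXU
  have hd2 : Fintype.card β * Module.finrank K XU ≤ Module.finrank K W := by
    let em : β → (n → K) →ₗ[K] (n × β → K) := fun a =>
      { toFun := fun v q => if q.2 = a then v q.1 else 0
        map_add' := by intro v w; funext q; simp only [Pi.add_apply]; split_ifs <;> simp
        map_smul' := by intro c w; funext q; simp }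
    have hem : ∀ a, XU.map (em a) ≤ W := by
      intro a
      rw [Submodule.map_le_iff_le_comap, hXU, iSup_le_iff]
      intro k
      rw [Submodule.map_le_iff_le_comap, iSup_le_iff]
      intro b
      rw [Submodule.map_le_iff_le_comap]
      intro v hv
      have h1 := hUW _ ⟨fun k' => if k' = k then Matrix.single a b 1 else 0, rfl⟩
      have h2 := h1 ⟨v, hv, rfl⟩
      have h3 : em a ((X k).mulVecLin (sl b v)) =
        (dmBlow X (fun k' => if k' = k then Matrix.single a b (1 : K) else 0)).mulVecLin v := by
        funext q
        rw [Matrix.mulVecLin_apply, Matrix.mulVecLin_apply, dmBlow_mulVec]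
        have h4 : ∀ q' : n × β, (∑ k', X k' q.1 q'.1 * (if k' = k then Matrix.single a b (1 : K) else 0) q.2 q'.2) =
          X k q.1 q'.1 * (Matrix.single a b (1 : K)) q.2 q'.2 := by
          intro q'
          rw [Finset.sum_eq_single k]
          · simp
          · intro k' _ hk'; simp [hk']
          · simp
        simp only [h4, Fintype.sum_prod_type]
        simp only [em, sl, LinearMap.coe_mk, AddHom.coe_mk, mulVecLin_apply, mulVec, dotProduct, LinearMap.funLeft_apply,
          Matrix.single_apply]
        by_cases hq : q.2 = a
        · simp [hq]
        · simp [hq, Ne.symm hq]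
      change em a ((X k).mulVecLin (sl b v)) ∈ W
      rw [h3]
      exact h2
    let f : (β → XU) →ₗ[K] W :=
      { toFun := fun g => ⟨∑ a, em a (g a).1, W.sum_mem fun a _ => hem a ⟨_, (g a).2, rfl⟩⟩
        map_add' := by
          intro g g'
          apply Subtype.ext
          simp [Finset.sum_add_distrib]
        map_smul' := by
          intro c g
          apply Subtype.ext
          simp [Finset.smul_sum] }
    have := LinearMap.finrank_le_finrank_of_injective (f := f) (by
      intro g g' h
      funext a
      apply Subtype.ext
      funext p
      have h5 := congrFun (congrArg Subtype.val h) (p, a)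
      simpa [f, em, Finset.sum_apply] using h5)
    rwa [Module.finrank_pi_fintype, Finset.sum_const, Finset.card_univ, smul_eq_mul] at this
  have := lt_of_le_of_lt hd2 (lt_of_lt_of_le hlt hd1)
  exact Nat.lt_of_mul_lt_mul_left this

theorem dm_blow_reindex {K : Type} [Field K] {ι n : Type} [Fintype ι]
    [Fintype n] (X : ι → Matrix n n K) {γ δ γ' δ' : Type} [Fintype δ] [Fintype δ']
    (e : γ' ≃ γ) (f : δ' ≃ δ) (T : ι → Matrix γ δ K) :
    (dmBlow X (fun k => (T k).submatrix e f)).rank = (dmBlow X T).rank := by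
  have : dmBlow X (fun k => (T k).submatrix e f) =
    (dmBlow X T).submatrix ((Equiv.refl n).prodCongr e) ((Equiv.refl n).prodCongr f) := by
    ext p q
    rfl
  rw [this, Matrix.rank_submatrix]

theorem dm_rank_le {K : Type} [Field K] {ι n : Type} [Fintype ι]
    [Fintype n] (X : ι → Matrix n n K) {γ δ : Type} [Fintype δ] (T : ι → Matrix γ δ K) :
    (dmBlow X T).rank ≤ Fintype.card n * Fintype.card δ := by
  have := (dmBlow X T).rank_le_card_width
  rwa [Fintype.card_prod] at this

theorem dm_max {K : Type} [Field K] [Infinite K] {ι n : Type} [Fintype ι] [DecidableEq ι]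
    [Fintype n] [DecidableEq n] (X : ι → Matrix n n K) (d : ℕ) [NeZero d] :
    ∃ k, k ≤ Fintype.card n ∧ (∃ T : ι → Matrix (ZMod d) (ZMod d) K, (dmBlow X T).rank = k * d) ∧
      ∀ T : ι → Matrix (ZMod d) (ZMod d) K, (dmBlow X T).rank ≤ k * d := by
  let S : Set ℕ := {ρ | ∃ T : ι → Matrix (ZMod d) (ZMod d) K, (dmBlow X T).rank = ρ}
  have hne : S.Nonempty := ⟨_, 0, rfl⟩
  have hbdd : BddAbove S := by
    refine ⟨Fintype.card n * d, ?_⟩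
    rintro _ ⟨T, rfl⟩
    have := dm_rank_le X T
    rwa [ZMod.card] at this
  obtain ⟨T0, hT0⟩ := Nat.sSup_mem hne hbdd
  have hle : ∀ T : ι → Matrix (ZMod d) (ZMod d) K, (dmBlow X T).rank ≤ sSup S :=
    fun T => le_csSup hbdd ⟨T, rfl⟩
  obtain ⟨k, hk⟩ := dm_regular X d (sSup S) hle ⟨T0, hT0⟩
  rw [hk, mul_comm] at hT0
  rw [hk, mul_comm] at hle
  refine ⟨k, ?_, ⟨T0, hT0⟩, hle⟩
  have := dm_rank_le X T0
  rw [ZMod.card, hT0] at this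
  exact Nat.le_of_mul_le_mul_right this (Nat.pos_of_neZero d)

theorem dm_jump {K : Type} [Field K] [Infinite K] {ι n : Type} [Fintype ι] [DecidableEq ι]
    [Fintype n] [DecidableEq n] (X : ι → Matrix n n K) {γ δ : Type} [Fintype γ] [Fintype δ]
    (d : ℕ) (hd : 0 < d) (hγ : Fintype.card γ = d) (hδ : Fintype.card δ = d) (T : ι → Matrix γ δ K)
    (hT : Fintype.card n * d < (dmBlow X T).rank + d) :
    ∃ T' : ι → Matrix (Fin d) (Fin d) K, (dmBlow X T').rank = Fintype.card n * d := by
  haveI : NeZero d := ⟨hd.ne'⟩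
  obtain ⟨k, hk, ⟨T0, hT0⟩, hmax⟩ := dm_max X d
  have e : ZMod d ≃ γ := Fintype.equivOfCardEq (by rw [ZMod.card, hγ])
  have f : ZMod d ≃ δ := Fintype.equivOfCardEq (by rw [ZMod.card, hδ])
  have h1 := hmax (fun k => (T k).submatrix e f)
  rw [dm_blow_reindex] at h1
  have hkn : k = Fintype.card n := by
    apply le_antisymm hk
    by_contra hlt
    push Not at hlt
    have : (k + 1) * d ≤ Fintype.card n * d := Nat.mul_le_mul_right _ hlt
    rw [add_mul, one_mul] at this
    omega
  have g : Fin d ≃ ZMod d := Fintype.equivOfCardEq (by rw [ZMod.card, Fintype.card_fin])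
  refine ⟨fun k => (T0 k).submatrix g g, ?_⟩
  rw [dm_blow_reindex, hT0, hkn]

theorem dm_exists {K : Type} [Field K] [Infinite K] {ι n : Type} [Fintype ι] [DecidableEq ι]
    [Fintype n] [DecidableEq n] (X : ι → Matrix n n K)
    (hX : ∀ U : Submodule K (n → K), Module.finrank K U ≤
      Module.finrank K (⨆ k, U.map (X k).mulVecLin : Submodule K (n → K))) :
    ∃ d, 0 < d ∧ ∃ T : ι → Matrix (Fin d) (Fin d) K, (dmBlow X T).rank = Fintype.card n * d := by
  let S : Set ℕ := {k | k ≤ Fintype.card n ∧ ∃ d, ∃ _ : NeZero d, ∃ T : ι → Matrix (ZMod d) (ZMod d) K, (dmBlow X T).rank = k * d}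
  have hS : ∀ d [NeZero d], ∃ k ∈ S, ∀ T : ι → Matrix (ZMod d) (ZMod d) K, (dmBlow X T).rank ≤ k * d := by
    intro d _
    obtain ⟨k, hk, hT, hmax⟩ := dm_max X d
    exact ⟨k, ⟨hk, d, inferInstance, hT⟩, hmax⟩
  have hne : S.Nonempty := by
    obtain ⟨k, hk, _⟩ := hS 1
    exact ⟨k, hk⟩
  have hbdd : BddAbove S := ⟨Fintype.card n, fun k hk => hk.1⟩
  obtain ⟨hkn, d, _, T0, hT0⟩ := Nat.sSup_mem hne hbdd
  have hmax : ∀ (γ : Type) [Fintype γ] [DecidableEq γ] (T : ι → Matrix γ γ K),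
      (dmBlow X T).rank ≤ sSup S * Fintype.card γ := by
    intro γ _ _ T
    rcases isEmpty_or_nonempty γ with h | h
    · have := dm_rank_le X T
      rw [Fintype.card_eq_zero (α := γ), mul_zero] at this
      omega
    · haveI : NeZero (Fintype.card γ) := ⟨Fintype.card_ne_zero⟩
      obtain ⟨k, hk, hk2⟩ := hS (Fintype.card γ)
      have e : ZMod (Fintype.card γ) ≃ γ := Fintype.equivOfCardEq (by rw [ZMod.card])
      have h1 := hk2 (fun k => (T k).submatrix e e)
      rw [dm_blow_reindex] at h1
      exact h1.trans (Nat.mul_le_mul_right _ (le_csSup hbdd hk))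
  have hd : 0 < d := Nat.pos_of_neZero d
  rcases lt_or_eq_of_le hkn with hlt | heq
  · obtain ⟨U, hU⟩ := dm_wong X T0 (sSup S) hlt (by rw [hT0, ZMod.card]) hmax
    have := hX U
    omega
  · refine ⟨d, hd, ?_⟩
    have g : Fin d ≃ ZMod d := Fintype.equivOfCardEq (by rw [ZMod.card, Fintype.card_fin])
    refine ⟨fun k => (T0 k).submatrix g g, ?_⟩
    rw [dm_blow_reindex, hT0, heq]

theorem dm_isUnit_of_rank {K : Type*} [Field K] {a : Type*} [Fintype a] [DecidableEq a]
    (M : Matrix a a K) (h : M.rank = Fintype.card a) : IsUnit M.det := by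
  rw [← Matrix.isUnit_iff_isUnit_det, ← Matrix.mulVec_injective_iff_isUnit]
  have h1 := LinearMap.finrank_range_add_finrank_ker M.mulVecLin
  rw [← Matrix.rank, h, Module.finrank_fintype_fun_eq_card] at h1
  have h2 : Module.finrank K (LinearMap.ker M.mulVecLin) = 0 := by omega
  rw [Submodule.finrank_eq_zero] at h2
  exact LinearMap.ker_eq_bot.mp h2

theorem dm_submod {K V : Type*} [Field K] [AddCommGroup V] [Module K V] [FiniteDimensional K V]
    {ι : Type*} [Fintype ι] [DecidableEq ι] (S : ι → Submodule K V) (o : ι) (c : ℕ) (hS : ⨆ i, S i = ⊤)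
    (h : ∀ j, j ≠ o → Module.finrank K (⨆ i : {i // i ≠ j}, S i : Submodule K V) + c ≤ Module.finrank K V) :
    Module.finrank K (S o) + (Fintype.card ι - 1) * c ≤ Module.finrank K V := by
  have key : ∀ s : Finset ι, o ∉ s → Module.finrank K (S o) + s.card * c ≤
      Module.finrank K (S o ⊔ ⨆ i ∈ s, S i : Submodule K V) := by
    intro s
    induction s using Finset.induction_on with
    | empty => intro _; simp only [Finset.card_empty, zero_mul, add_zero]; exact Submodule.finrank_mono le_sup_left
    | insert j s hj ih =>
      intro ho
      rw [Finset.mem_insert, not_or] at ho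
      have ih' := ih ho.2
      set G := S o ⊔ ⨆ i ∈ s, S i with hG
      set H : Submodule K V := ⨆ i : {i // i ≠ j}, S i with hH
      have hGH : G ≤ H := by
        refine sup_le (le_iSup (fun i : {i // i ≠ j} => S i) ⟨o, ho.1⟩) (iSup₂_le fun i hi => ?_)
        exact le_iSup (fun i : {i // i ≠ j} => S i) ⟨i, fun hij => hj (hij ▸ hi)⟩
      have hG' : S o ⊔ ⨆ i ∈ insert j s, S i = G ⊔ S j := by
        rw [Finset.iSup_insert, hG, sup_assoc, sup_comm (S j)]
      have hHt : H ⊔ S j = ⊤ := by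
        rw [eq_top_iff, ← hS]
        refine iSup_le fun i => ?_
        by_cases hij : i = j
        · rw [hij]; exact le_sup_right
        · exact (le_iSup (fun i : {i // i ≠ j} => S i) ⟨i, hij⟩).trans le_sup_left
      have e1 := Submodule.finrank_sup_add_finrank_inf_eq G (S j)
      have e2 := Submodule.finrank_sup_add_finrank_inf_eq H (S j)
      rw [hHt, finrank_top] at e2
      have e3 : Module.finrank K (G ⊓ S j : Submodule K V) ≤ Module.finrank K (H ⊓ S j : Submodule K V) :=
        Submodule.finrank_mono (inf_le_inf_right _ hGH)
      have e4 : Module.finrank K H + c ≤ Module.finrank K V := h j (Ne.symm ho.1)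
      rw [hG', Finset.card_insert_of_notMem hj, add_mul, one_mul]
      omega
  have h1 := key (Finset.univ.erase o) (by simp)
  rw [Finset.card_erase_of_mem (Finset.mem_univ _), Finset.card_univ] at h1
  exact h1.trans (Submodule.finrank_le _)

theorem dm_range_cols {K : Type} [Field K] {ι n : Type} [Fintype ι]
    [Fintype n] (X : ι → Matrix n n K) {γ δ : Type} [Fintype δ] [DecidableEq δ]
    (T : ι → Matrix γ δ K) :
    LinearMap.range (dmBlow X T).mulVecLin =
      ⨆ b, LinearMap.range (dmBlow X (fun k => (T k).submatrix id (fun _ : Unit => b))).mulVecLin := by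
  apply le_antisymm
  · rintro _ ⟨y, rfl⟩
    have : (dmBlow X T).mulVecLin y = ∑ b, (dmBlow X (fun k => (T k).submatrix id (fun _ : Unit => b))).mulVecLin
        (fun q => y (q.1, b)) := by
      funext p
      rw [Finset.sum_apply]
      simp only [mulVecLin_apply, dmBlow_mulVec, Fintype.sum_prod_type, submatrix_apply, id,
        Finset.univ_unique, Finset.sum_const, Finset.card_singleton, one_smul]
      rw [Finset.sum_comm]
    rw [this]
    exact Submodule.sum_mem _ fun b _ => Submodule.mem_iSup_of_mem b ⟨_, rfl⟩
  · refine iSup_le fun b => ?_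
    rintro _ ⟨y, rfl⟩
    refine ⟨fun q => if q.2 = b then y (q.1, ()) else 0, ?_⟩
    funext p
    simp only [mulVecLin_apply, dmBlow_mulVec, Fintype.sum_prod_type, submatrix_apply, id,
        Finset.univ_unique, Finset.sum_const, Finset.card_singleton, one_smul]
    simp

theorem dm_multiple {K : Type} [Field K] {ι n : Type} [Fintype ι]
    [Fintype n] [DecidableEq n] (X : ι → Matrix n n K) {γ δ : Type} [Fintype γ] [DecidableEq γ]
    [Fintype δ] [DecidableEq δ] (T : ι → Matrix γ γ K)
    (hT : (dmBlow X T).rank = Fintype.card n * Fintype.card γ) :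
    (dmBlow X (fun k => Matrix.kroneckerMap (· * ·) (T k) (1 : Matrix δ δ K))).rank =
      Fintype.card n * Fintype.card (γ × δ) := by
  have h1 : dmBlow X (fun k => Matrix.kroneckerMap (· * ·) (T k) (1 : Matrix δ δ K)) =
    (Matrix.kroneckerMap (· * ·) (dmBlow X T) (1 : Matrix δ δ K)).submatrix
      (Equiv.prodAssoc n γ δ).symm (Equiv.prodAssoc n γ δ).symm := by
    ext p q
    simp [dmBlow, Finset.sum_mul, mul_assoc]
  rw [h1, Matrix.rank_submatrix, Matrix.rank_of_isUnit]
  · simp only [Fintype.card_prod, mul_assoc]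
  · rw [Matrix.isUnit_iff_isUnit_det, Matrix.det_kronecker, det_one, one_pow, mul_one]
    exact (dm_isUnit_of_rank _ (by rw [hT, Fintype.card_prod])).pow _

noncomputable def dmComb {K : Type} [Field K] {ι n : Type} [Fintype ι] (X : ι → Matrix n n K) (t : ι → K) :
    Matrix n n K := ∑ k, t k • X k

theorem dmComb_add {K : Type} [Field K] {ι n : Type} [Fintype ι] (X : ι → Matrix n n K) (t t' : ι → K) :
    dmComb X (t + t') = dmComb X t + dmComb X t' := by
  simp [dmComb, add_smul, Finset.sum_add_distrib]

theorem dmComb_single {K : Type} [Field K] {ι n : Type} [Fintype ι] [DecidableEq ι] (X : ι → Matrix n n K) (k : ι) :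
    dmComb X (Pi.single k 1) = X k := by
  simp [dmComb, Pi.single_apply]

theorem dm_line {K : Type} [Field K] {n : Type} [Fintype n] (M : Matrix n n K) (hM : M.rank ≤ 1)
    (u : n → K) (hu : M *ᵥ u ≠ 0) (w : n → K) : ∃ c : K, M *ᵥ w = c • (M *ᵥ u) := by
  have h1 : Submodule.span K {M *ᵥ u} = LinearMap.range M.mulVecLin := by
    apply Submodule.eq_of_le_of_finrank_le
    · rw [Submodule.span_singleton_le_iff_mem]
      exact ⟨u, rfl⟩
    · rw [finrank_span_singleton hu]
      exact hM
  have h2 : M *ᵥ w ∈ Submodule.span K {M *ᵥ u} := h1 ▸ ⟨w, rfl⟩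
  obtain ⟨c, hc⟩ := Submodule.mem_span_singleton.mp h2
  exact ⟨c, hc.symm⟩

theorem dm_act {K : Type} [Field K] {ι n : Type} [Fintype ι] 
    [Fintype n] (X : ι → Matrix n n K)
    (hX : ∀ U : Submodule K (n → K), Module.finrank K U ≤
      Module.finrank K (⨆ k, U.map (X k).mulVecLin : Submodule K (n → K)))
    (U : Submodule K (n → K)) (hU : 0 < Module.finrank K U) : ∃ k, ∃ u ∈ U, X k *ᵥ u ≠ 0 := by
  by_contra! hcon
  have : (⨆ k, U.map (X k).mulVecLin : Submodule K (n → K)) = ⊥ := by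
    rw [eq_bot_iff]
    refine iSup_le fun k => ?_
    rintro _ ⟨u, hu, rfl⟩
    exact hcon k u hu
  have h2 := hX U
  rw [this, finrank_bot] at h2
  omega

theorem dm_rank_two {K : Type} [Field K] {ι n : Type} [Fintype ι] [DecidableEq ι]
    [Fintype n] [DecidableEq n] (X : ι → Matrix n n K) (hn : 2 ≤ Fintype.card n)
    (hX : ∀ U : Submodule K (n → K), Module.finrank K U ≤
      Module.finrank K (⨆ k, U.map (X k).mulVecLin : Submodule K (n → K))) :
    ∃ t : ι → K, 2 ≤ (dmComb X t).rank := by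
  by_contra! hcon
  have hr : ∀ t, (dmComb X t).rank ≤ 1 := fun t => Nat.le_of_lt_succ (hcon t)
  have hrX : ∀ k, (X k).rank ≤ 1 := fun k => by rw [← dmComb_single X k]; exact hr _
  have hr2 : ∀ k l, (X k + X l).rank ≤ 1 := fun k l => by
    rw [← dmComb_single X k, ← dmComb_single X l, ← dmComb_add]; exact hr _
  have hr3 : ∀ k l m, (X k + X l + X m).rank ≤ 1 := fun k l m => by
    rw [← dmComb_single X k, ← dmComb_single X l, ← dmComb_single X m, ← dmComb_add, ← dmComb_add]; exact hr _
  obtain ⟨b, w, _, hbw⟩ := dm_act X hX ⊤ (by rw [finrank_top, Module.finrank_fintype_fun_eq_card]; omega)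
  set x := X b *ᵥ w with hx
  have hker : 0 < Module.finrank K (LinearMap.ker (X b).mulVecLin) := by
    have h1 := LinearMap.finrank_range_add_finrank_ker (X b).mulVecLin
    rw [← Matrix.rank, Module.finrank_fintype_fun_eq_card] at h1
    have := hrX b
    omega
  obtain ⟨c, u, hu, hcu⟩ := dm_act X hX _ hker
  have hu' : X b *ᵥ u = 0 := hu
  -- anything of rank one not killing the kernel of `X b` has image spanned by `x`
  have claim : ∀ M : Matrix n n K, M.rank ≤ 1 → (X b + M).rank ≤ 1 → M *ᵥ u ≠ 0 → ∀ v, ∃ a : K, M *ᵥ v = a • x := by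
    intro M hM hBM hMu v
    obtain ⟨a1, ha1⟩ := dm_line M hM u hMu w
    obtain ⟨a2, ha2⟩ := dm_line (X b + M) hBM u (by rw [add_mulVec, hu', zero_add]; exact hMu) w
    rw [add_mulVec, add_mulVec, hu', zero_add, ha1, ← hx] at ha2
    obtain ⟨a3, ha3⟩ := dm_line M hM u hMu v
    have hxx : x = (a2 - a1) • (M *ᵥ u) := by rw [sub_smul, ← ha2]; abel
    have hne : a2 - a1 ≠ 0 := by
      intro h0
      rw [h0, zero_smul] at hxx
      exact hbw hxx
    refine ⟨a3 * (a2 - a1)⁻¹, ?_⟩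
    rw [ha3, hxx, smul_smul, mul_assoc, inv_mul_cancel₀ hne, mul_one]
  have hc := claim (X c) (hrX c) (hr2 b c) hcu
  have hall : ∀ k v, ∃ a : K, X k *ᵥ v = a • x := by
    intro k v
    by_cases hku : X k *ᵥ u = 0
    · obtain ⟨a1, h1⟩ := claim (X k + X c) (hr2 k c) (by rw [← add_assoc]; exact hr3 b k c)
        (by rw [add_mulVec, hku, zero_add]; exact hcu) v
      obtain ⟨a2, h2⟩ := hc v
      refine ⟨a1 - a2, ?_⟩
      rw [add_mulVec, h2] at h1
      rw [sub_smul, ← h1]; abel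
    · exact claim (X k) (hrX k) (hr2 b k) hku v
  have h1 := hX ⊤
  rw [finrank_top, Module.finrank_fintype_fun_eq_card] at h1
  have h2 : (⨆ k, (⊤ : Submodule K (n → K)).map (X k).mulVecLin : Submodule K (n → K)) ≤ Submodule.span K {x} := by
    refine iSup_le fun k => ?_
    rintro _ ⟨v, _, rfl⟩
    obtain ⟨a, ha⟩ := hall k v
    rw [Matrix.mulVecLin_apply, ha]
    exact Submodule.smul_mem _ _ (Submodule.mem_span_singleton_self x)
  have h3 := Submodule.finrank_mono h2
  rw [finrank_span_singleton hbw] at h3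
  omega

theorem dm_greedy {K : Type} [Field K] {ι n : Type} [Fintype ι] [DecidableEq ι]
    [Fintype n] [DecidableEq n] (X : ι → Matrix n n K) (hn : 2 ≤ Fintype.card n)
    (hX : ∀ U : Submodule K (n → K), Module.finrank K U ≤
      Module.finrank K (⨆ k, U.map (X k).mulVecLin : Submodule K (n → K))) (j : ℕ) :
    ∃ t : Fin (j + 1) → ι → K,
      Module.finrank K (⨅ a, LinearMap.ker (dmComb X (t a)).mulVecLin : Submodule K (n → K)) ≤
        Fintype.card n - 2 - j := by
  induction j with
  | zero =>
    obtain ⟨t, ht⟩ := dm_rank_two X hn hX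
    refine ⟨fun _ => t, ?_⟩
    have h1 := LinearMap.finrank_range_add_finrank_ker (dmComb X t).mulVecLin
    rw [← Matrix.rank, Module.finrank_fintype_fun_eq_card] at h1
    rw [ciInf_const]
    omega
  | succ j ih =>
    obtain ⟨t, ht⟩ := ih
    set P : Submodule K (n → K) := ⨅ a, LinearMap.ker (dmComb X (t a)).mulVecLin with hP
    have hle : ∀ s : ι → K, (⨅ a, LinearMap.ker (dmComb X ((Fin.snoc t s : Fin (j + 1 + 1) → ι → K) a)).mulVecLin : Submodule K (n → K)) ≤
        P ⊓ LinearMap.ker (dmComb X s).mulVecLin := by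
      intro s
      refine le_inf (le_iInf fun a => ?_) ?_
      · refine (iInf_le _ (Fin.castSucc a)).trans ?_
        rw [Fin.snoc_castSucc]
      · refine (iInf_le _ (Fin.last _)).trans ?_
        rw [Fin.snoc_last]
    rcases Nat.eq_zero_or_pos (Module.finrank K P) with h0 | h0
    · refine ⟨Fin.snoc t 0, ?_⟩
      have := Submodule.finrank_mono ((hle 0).trans inf_le_left)
      omega
    · obtain ⟨k, u, hu, hku⟩ := dm_act X hX P h0
      refine ⟨Fin.snoc t (Pi.single k 1), ?_⟩
      have h1 := Submodule.finrank_mono (hle (Pi.single k 1))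
      have h2 : P ⊓ LinearMap.ker (dmComb X (Pi.single k 1)).mulVecLin < P := by
        apply lt_of_le_of_ne inf_le_left
        intro h
        have h3 : u ∈ P ⊓ LinearMap.ker (dmComb X (Pi.single k 1)).mulVecLin := h.symm ▸ hu
        have h4 := h3.2
        rw [dmComb_single] at h4
        exact hku h4
      have h5 := Submodule.finrank_lt_finrank_of_lt h2
      omega

theorem dm_col {K : Type} [Field K] {ι n : Type} [Fintype ι] [DecidableEq ι]
    [Fintype n] [DecidableEq n] (X : ι → Matrix n n K) (hn : 2 ≤ Fintype.card n)
    (hX : ∀ U : Submodule K (n → K), Module.finrank K U ≤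
      Module.finrank K (⨆ k, U.map (X k).mulVecLin : Submodule K (n → K))) (d : ℕ)
    (hd : Fintype.card n ≤ d + 1) :
    ∃ T : ι → Matrix (Fin d) Unit K, Fintype.card n ≤ (dmBlow X T).rank := by
  obtain ⟨j, rfl⟩ : ∃ j, d = j + 1 := ⟨d - 1, by omega⟩
  obtain ⟨t, ht⟩ := dm_greedy X hn hX j
  have ht0 : (⨅ a, LinearMap.ker (dmComb X (t a)).mulVecLin : Submodule K (n → K)) = ⊥ := by
    rw [← Submodule.finrank_eq_zero (R := K)]
    omega
  refine ⟨fun k => of fun a _ => t a k, ?_⟩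
  have h1 := LinearMap.finrank_range_add_finrank_ker (dmBlow X (fun k => of fun a (_ : Unit) => t a k)).mulVecLin
  rw [← Matrix.rank, Module.finrank_fintype_fun_eq_card, Fintype.card_prod, Fintype.card_unit, mul_one] at h1
  have h2 : LinearMap.ker (dmBlow X (fun k => of fun a (_ : Unit) => t a k)).mulVecLin = ⊥ := by
    rw [eq_bot_iff]
    intro y hy
    have hy' : dmBlow X (fun k => of fun a (_ : Unit) => t a k) *ᵥ y = 0 := hy
    have h3 : (fun p => y (p, ())) ∈ (⨅ a, LinearMap.ker (dmComb X (t a)).mulVecLin : Submodule K (n → K)) := by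
      rw [Submodule.mem_iInf]
      intro a
      rw [LinearMap.mem_ker]
      funext p
      have := congrFun hy' (p, a)
      rw [dmBlow_mulVec] at this
      simp only [Fintype.sum_prod_type, Finset.univ_unique, Finset.sum_const, Finset.card_singleton, one_smul, of_apply] at this
      rw [Pi.zero_apply] at this ⊢
      rw [← this, Matrix.mulVecLin_apply, mulVec, dotProduct]
      refine Finset.sum_congr rfl fun q _ => ?_
      congr 1
      simp [dmComb, Matrix.sum_apply, mul_comm]
    rw [ht0, Submodule.mem_bot] at h3
    rw [Submodule.mem_bot]
    funext q
    exact congrFun h3 q.1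
  rw [h2, finrank_bot] at h1
  omega

theorem dm_descend {K : Type} [Field K] [Infinite K] {ι n : Type} [Fintype ι] [DecidableEq ι]
    [Fintype n] [DecidableEq n] (X : ι → Matrix n n K) (hn : 2 ≤ Fintype.card n)
    (hX : ∀ U : Submodule K (n → K), Module.finrank K U ≤
      Module.finrank K (⨆ k, U.map (X k).mulVecLin : Submodule K (n → K))) (d : ℕ)
    (hd : Fintype.card n ≤ d + 1) (T : ι → Matrix (Fin (d + 1)) (Fin (d + 1)) K)
    (hT : (dmBlow X T).rank = Fintype.card n * (d + 1)) :
    ∃ T' : ι → Matrix (Fin d) (Fin d) K, (dmBlow X T').rank = Fintype.card n * d := by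
  have hd0 : 0 < d := by omega
  have hu := dm_isUnit_of_rank _ (by rw [hT, Fintype.card_prod, Fintype.card_fin])
  have hrow : Fintype.card n * d ≤
      (dmBlow X (fun k => (T k).submatrix (Fin.castSucc : Fin d → Fin (d + 1)) id)).rank := by
    set r : n × Fin d → n × Fin (d + 1) := fun p => (p.1, Fin.castSucc p.2) with hr
    have h1 : dmBlow X (fun k => (T k).submatrix (Fin.castSucc : Fin d → Fin (d + 1)) id) =
        (dmBlow X T).submatrix r id := rfl
    have h2 : (dmBlow X T).submatrix r id * ((dmBlow X T)⁻¹).submatrix id r = 1 := by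
      have h3 : (dmBlow X T).submatrix r id * ((dmBlow X T)⁻¹).submatrix id r =
          ((dmBlow X T) * (dmBlow X T)⁻¹).submatrix r r := by
        ext p q
        rfl
      rw [h3, Matrix.mul_nonsing_inv _ hu]
      apply Matrix.submatrix_one
      intro p q hpq
      simp only [hr, Prod.mk.injEq, Fin.castSucc_inj] at hpq
      exact Prod.ext hpq.1 hpq.2
    have h4 := Matrix.rank_mul_le_left ((dmBlow X T).submatrix r id) (((dmBlow X T)⁻¹).submatrix id r)
    rw [h2, Matrix.rank_one, Fintype.card_prod, Fintype.card_fin] at h4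
    rw [h1]; exact h4
  obtain ⟨C, hC⟩ := dm_col X hn hX d hd
  let Φ : (ι × Fin d × Fin (d + 1) → K) →ₗ[K] Matrix (n × Fin d) (n × Fin (d + 1)) K :=
    { toFun := fun t => dmBlow X (fun k => of fun a b => t (k, a, b))
      map_add' := by
        intro x y; ext p q
        simp [dmBlow, mul_add, Finset.sum_add_distrib]
      map_smul' := by
        intro c x; ext p q
        simp [dmBlow, Finset.mul_sum, mul_left_comm] }
  let Ψ : (ι × Fin d × Fin (d + 1) → K) →ₗ[K] Matrix (n × Fin d) (n × Unit) K :=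
    { toFun := fun t => dmBlow X (fun k => of fun a (_ : Unit) => t (k, a, 0))
      map_add' := by
        intro x y; ext p q
        simp [dmBlow, mul_add, Finset.sum_add_distrib]
      map_smul' := by
        intro c x; ext p q
        simp [dmBlow, Finset.mul_sum, mul_left_comm] }
  obtain ⟨z, hz1, hz2⟩ := dm_generic_two K Φ Ψ (fun t => T t.1 (Fin.castSucc t.2.1) t.2.2)
    (fun t => C t.1 t.2.1 ()) _ _ hrow hC
  set Z : ι → Matrix (Fin d) (Fin (d + 1)) K := fun k => of fun a b => z (k, a, b) with hZ
  have hz1' : Fintype.card n * d ≤ (dmBlow X Z).rank := hz1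
  let S : Fin (d + 1) → Submodule K (n × Fin d → K) := fun b =>
    LinearMap.range (dmBlow X (fun k => (Z k).submatrix id (fun _ : Unit => b))).mulVecLin
  have hz2' : Fintype.card n ≤ Module.finrank K (S 0) := hz2
  have hV : Module.finrank K (n × Fin d → K) = Fintype.card n * d := by
    rw [Module.finrank_fintype_fun_eq_card, Fintype.card_prod, Fintype.card_fin]
  have hS : ⨆ i, S i = ⊤ := by
    have := dm_range_cols X Z
    rw [← this]
    apply Submodule.eq_top_of_finrank_eq
    apply le_antisymm (Submodule.finrank_le _)
    rw [hV]; exact hz1'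
  by_cases hall : ∀ j, j ≠ (0 : Fin (d + 1)) → Module.finrank K (⨆ i : {i // i ≠ j}, S i : Submodule K (n × Fin d → K)) + d ≤ Module.finrank K (n × Fin d → K)
  · exfalso
    have h := dm_submod S 0 d hS hall
    rw [hV, Fintype.card_fin, Nat.add_sub_cancel] at h
    nlinarith
  · push Not at hall
    obtain ⟨j, -, hj⟩ := hall
    rw [hV] at hj
    refine dm_jump X d hd0 (γ := Fin d) (δ := {i : Fin (d + 1) // i ≠ j}) (Fintype.card_fin d) ?_
      (fun k => (Z k).submatrix id Subtype.val) ?_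
    · rw [Fintype.card_subtype_compl, Fintype.card_fin, Fintype.card_subtype_eq]; rfl
    · rw [Matrix.rank, dm_range_cols]
      exact hj

theorem dm_full {K : Type} [Field K] [Infinite K] {ι n : Type} [Fintype ι] [DecidableEq ι]
    [Fintype n] [DecidableEq n] (X : ι → Matrix n n K) (hn : 2 ≤ Fintype.card n)
    (hX : ∀ U : Submodule K (n → K), Module.finrank K U ≤
      Module.finrank K (⨆ k, U.map (X k).mulVecLin : Submodule K (n → K))) :
    ∃ T : ι → Matrix (Fin (Fintype.card n - 1)) (Fin (Fintype.card n - 1)) K, (dmBlow X T).det ≠ 0 := by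
  obtain ⟨d0, hd0, T0, hT0⟩ := dm_exists X hX
  have h1 := dm_multiple X (δ := n) T0 (by rw [hT0, Fintype.card_fin])
  obtain ⟨T1, hT1⟩ := dm_jump X (d0 * Fintype.card n) (Nat.mul_pos hd0 (by omega))
    (γ := Fin d0 × n) (δ := Fin d0 × n) (by simp) (by simp) _ (by
      rw [h1, Fintype.card_prod, Fintype.card_fin]
      have : 0 < d0 * Fintype.card n := Nat.mul_pos hd0 (by omega)
      omega)
  have key : ∀ e d, Fintype.card n ≤ d + 1 →
      (∃ T : ι → Matrix (Fin (d + e)) (Fin (d + e)) K, (dmBlow X T).rank = Fintype.card n * (d + e)) →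
      ∃ T : ι → Matrix (Fin d) (Fin d) K, (dmBlow X T).rank = Fintype.card n * d := by
    intro e
    induction e with
    | zero => intro d _ h; exact h
    | succ e ih =>
      intro d hd ⟨T, hT⟩
      exact ih d hd (dm_descend X hn hX (d + e) (by omega) T hT)
  obtain ⟨T, hT⟩ := key (d0 * Fintype.card n - (Fintype.card n - 1)) (Fintype.card n - 1) (by omega) (by
    have : Fintype.card n - 1 + (d0 * Fintype.card n - (Fintype.card n - 1)) = d0 * Fintype.card n := by
      have : Fintype.card n ≤ d0 * Fintype.card n := Nat.le_mul_of_pos_left _ hd0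
      omega
    rw [this]
    exact ⟨T1, hT1⟩)
  exact ⟨T, (dm_isUnit_of_rank _ (by rw [hT, Fintype.card_prod, Fintype.card_fin])).ne_zero⟩

noncomputable def dmPoly {K : Type} [Field K] {n m : ℕ} {γ : Type} [Fintype γ] [DecidableEq γ]
    (T : Fin m → Matrix γ γ K) : MvPolynomial (Fin m × Fin n × Fin n) K :=
  Matrix.det (of fun p q : Fin n × γ =>
    ∑ k, MvPolynomial.X (k, p.1, q.1) * MvPolynomial.C (T k p.2 q.2))

theorem dmPoly_eval {K : Type} [Field K] {n m : ℕ} {γ : Type} [Fintype γ] [DecidableEq γ]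
    (T : Fin m → Matrix γ γ K) (v : Fin m → Matrix (Fin n) (Fin n) K) :
    aeval (matCoords v) (dmPoly T) = (dmBlow v T).det := by
  rw [dmPoly, AlgHom.map_det]
  congr 1
  ext p q
  simp [dmBlow, matCoords]

theorem dmPoly_homog {K : Type} [Field K] {n m : ℕ} {γ : Type} [Fintype γ] [DecidableEq γ]
    (T : Fin m → Matrix γ γ K) :
    (dmPoly T : MvPolynomial (Fin m × Fin n × Fin n) K).IsHomogeneous (Fintype.card (Fin n) * Fintype.card γ) := by
  rw [dmPoly, Matrix.det_apply']
  refine IsHomogeneous.sum _ _ _ fun s _ => ?_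
  have h1 : (∏ i : Fin n × γ, (∑ k, (MvPolynomial.X (k, (s i).1, i.1) * MvPolynomial.C (T k (s i).2 i.2) : MvPolynomial (Fin m × Fin n × Fin n) K)) : MvPolynomial (Fin m × Fin n × Fin n) K).IsHomogeneous
      (∑ _i : Fin n × γ, 1) := by
    refine IsHomogeneous.prod _ _ _ fun i _ => ?_
    refine IsHomogeneous.sum _ _ _ fun k _ => ?_
    have := (isHomogeneous_X K (k, (s i).1, i.1)).mul (isHomogeneous_C (Fin m × Fin n × Fin n) (T k (s i).2 i.2))
    exact this
  rw [Finset.sum_const, smul_eq_mul, mul_one, Finset.card_univ, Fintype.card_prod] at h1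
  have h2 := (isHomogeneous_C (Fin m × Fin n × Fin n) (((Equiv.Perm.sign s : ℤ)) : K)).mul h1
  rw [zero_add, map_intCast] at h2
  exact h2

theorem dmPoly_mem {K : Type} [Field K] {n m : ℕ} {γ : Type} [Fintype γ] [DecidableEq γ]
    (T : Fin m → Matrix γ γ K) : dmPoly T ∈ matrixSemiInvariants K n m := by
  simp only [matrixSemiInvariants, Algebra.mem_iInf, AlgHom.mem_equalizer]
  intro A B X
  rw [dmPoly_eval, dmPoly_eval]
  have h : dmBlow (fun i => A.val * X i * (B⁻¹).val) T =
      Matrix.kroneckerMap (· * ·) A.val (1 : Matrix γ γ K) * dmBlow X T *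
        Matrix.kroneckerMap (· * ·) (B⁻¹).val (1 : Matrix γ γ K) := by
    have hX : ∀ Y : Fin m → Matrix (Fin n) (Fin n) K, dmBlow Y T = ∑ k, Matrix.kroneckerMap (· * ·) (Y k) (T k) := by
      intro Y; ext p q; simp [dmBlow, Matrix.sum_apply]
    rw [hX, hX, Finset.mul_sum, Finset.sum_mul]
    refine Finset.sum_congr rfl fun k _ => ?_
    rw [← Matrix.mul_kronecker_mul, ← Matrix.mul_kronecker_mul, one_mul, mul_one]
  rw [h, det_mul, det_mul, det_kronecker, det_kronecker, det_one, A.2, (B⁻¹).2]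
  simp

/-- **Derksen–Makam.** For `n ≥ 2`, with `r` the Krull dimension of `R(n,m)`,
there exist `r` homogeneous semi-invariants of degree `n(n-1)` whose common zero set equals
the null cone, i.e. the common zero set of all homogeneous semi-invariants of positive
degree. -/
theorem stmt_18 (K : Type) [Field K] [IsAlgClosed K] (n m : ℕ) (hn : 2 ≤ n) (hm : 1 ≤ m)
    (r : ℕ) (hr : ringKrullDim ↥(matrixSemiInvariants K n m) = r) :
    ∃ f : Fin r → MvPolynomial (Fin m × Fin n × Fin n) K,
      (∀ i, f i ∈ matrixSemiInvariants K n m ∧ (f i).IsHomogeneous (n * (n - 1))) ∧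
        ∀ v : Fin m → Matrix (Fin n) (Fin n) K,
          (∀ i, aeval (matCoords v) (f i) = 0) ↔
            ∀ g ∈ matrixSemiInvariants K n m, ∀ d, 0 < d → g.IsHomogeneous d →
              aeval (matCoords v) g = 0 := by
  have : Infinite K := IsAlgClosed.instInfinite
  have hD : 0 < n * (n - 1) := Nat.mul_pos (by omega) (by omega)
  let W : Submodule K (MvPolynomial (Fin m × Fin n × Fin n) K) :=
    homogeneousSubmodule _ K (n * (n - 1)) ⊓ Subalgebra.toSubmodule (matrixSemiInvariants K n m)
  have hW : W.FG := Submodule.FG.of_le (homogeneousSubmodule_fg _ K _) inf_le_left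
  obtain ⟨N, F, hF⟩ := Submodule.fg_iff_exists_fin_generating_family.mp hW
  have hF' : ∀ i, F i ∈ W := fun i => hF ▸ Submodule.subset_span ⟨i, rfl⟩
  obtain ⟨e, h, hh, hind, hz⟩ := dm_reduce (matrixSemiInvariants K n m) hD N F
    (fun i => ⟨(hF' i).2, (mem_homogeneousSubmodule _ _).mp (hF' i).1⟩)
  have her : e ≤ r := by
    have := dm_dim K (matrixSemiInvariants K n m) h (fun i => (hh i).1) hind
    rw [hr] at this
    exact_mod_cast this
  refine ⟨fun i => if hi : (i : ℕ) < e then h ⟨i, hi⟩ else 0, ?_, ?_⟩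
  · intro i
    by_cases hi : (i : ℕ) < e
    · simp only [hi, dif_pos]; exact hh _
    · simp only [hi, dif_neg, not_false_eq_true]
      exact ⟨Subalgebra.zero_mem _, isHomogeneous_zero _ _ _⟩
  · intro v
    constructor
    · intro hv g hg d hd hgd
      have hv1 : ∀ i, aeval (matCoords v) (h i) = 0 := by
        intro i
        have := hv ⟨i, i.2.trans_le her⟩
        simpa using this
      have hv2 := hz _ hv1
      have hv3 : ∀ p ∈ W, aeval (matCoords v) p = 0 := by
        intro p hp
        rw [← hF] at hp
        induction hp using Submodule.span_induction with
        | mem x hx => obtain ⟨i, rfl⟩ := hx; exact hv2 i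
        | zero => exact map_zero _
        | add x y _ _ hx hy => rw [map_add, hx, hy, add_zero]
        | smul c x _ hx => rw [map_smul, hx, smul_zero]
      by_cases hX : ∀ U : Submodule K (Fin n → K), Module.finrank K U ≤
          Module.finrank K (⨆ k, U.map (v k).mulVecLin : Submodule K (Fin n → K))
      · exfalso
        obtain ⟨T, hT⟩ := dm_full v (by rw [Fintype.card_fin]; exact hn) hX
        apply hT
        rw [← dmPoly_eval]
        refine hv3 _ ⟨?_, dmPoly_mem T⟩
        have h5 := dmPoly_homog (n := n) T
        have h6 : Fintype.card (Fin n) * Fintype.card (Fin (Fintype.card (Fin n) - 1)) = n * (n - 1) := by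
          simp only [Fintype.card_fin]
        exact (mem_homogeneousSubmodule _ _).mpr (h6 ▸ h5)
      · push Not at hX
        obtain ⟨U, hU⟩ := hX
        exact dm_null hg hgd hd v U hU
    · intro hv i
      by_cases hi : (i : ℕ) < e
      · simp only [hi, dif_pos]
        exact hv _ (hh _).1 _ hD (hh _).2
      · simp only [hi, dif_neg, not_false_eq_true, map_zero]
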